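/- arXiv:0807.5101 — 2 statements merged into one kernel-verified Lean document; each statement's English description precedes it below -/
import Mathlib

section
/- There exists an absolute constant C > 0 such that the following holds. Let H be a finite abelian group of exponent 2, let 𝒜 = (A_h)_{h∈H} be a family on H of density α > 0, set K := ‖f_𝒜‖²_{L²(H)} / α², and let L ≥ max{K, 2} be a parameter. Then either Λ(𝒜) ≥ exp(−(1 + (log α^{−1})²)·exp(C·L³·(log L)²)), or there exist a subgroup H' ≤ H of index 2 and a family 𝒜' on H' such that P_{H'}(𝒜') ≥ α + L·α²/(4K) and Λ(𝒜) ≥ 2^{−4}·Λ(𝒜'). -/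
/-!
Write `f` for the density function of the family, `F_h` for the Fourier transform of the indicator
function of `A h`, and `e(γ, x) = ±1` for a perfect pairing on `H`. Fourier inversion gives
`Λ(𝒜) = ∑_γ f̂(γ) · E_h F_h(γ)² e(γ, h)` (`form_fourier`), and the zero frequency contributes `K α³`.

*Density increment.* Put `η = L α² / (4K)`. If some `γ ≠ 0` has `|f̂(γ)| ≥ η` or `E_h |F_h(γ)| ≥ η`,
then passing to the kernel of `γ`, and to the better coset of it for every fibre and for the base
points, gives the second alternative (`increment`). In exponent `2` translating a fibre does not
change the sums `a + a'`, so configurations of the new family are configurations of the old one.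

*No increment.* If `Λ(𝒜) ≥ K α³ / 2` there is nothing to do. Otherwise the nonzero frequencies
with `|f̂(γ)| ≥ K α² / 4` form a set `S` with at most `16 / (K α²)` elements, and `|f̂| ≤ η` forces
`∑_{γ ∈ S} E_h F_h(γ)² ≥ K² α / L`. Since `E_h |F_h(γ)| ≤ η` on `S`, frequencies at which `F_h` is
below `α / (16 L²)` contribute little, so for a set of `h` of density at least `α / (4L)` the
remaining frequencies in `S` carry a proportion `1 / (4L)` of the `L²` mass of `A h`
(`spectral_lower`). Chang's theorem (`chang`) bounds the rank of these frequencies by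
`d = O(L⁶ log (L² / α))`. There are at most `(|S| + 1) ^ d` bases, so by pigeonhole many `h` share the
same annihilator `V`, on a coset of which each of these `A h` has density at least `1 / (4L)`
(`dense_coset`, `structured_lower`). Inside `V` the fibres are dense, and a density increment on the
set of base points alone, which ends after `O(L log (1 / ω))` steps when its density is `ω`, produces
configurations (`cnt_lower`). All losses are quasi-polynomial in `α` and the exponent is polynomial
in `L` (`numerics`).
-/

open scoped BigOperators Classical

/-- The density of a family `𝒜 = (A_h)_{h ∈ H}` on `H`:
`P_H(𝒜) = (1/|H|)·Σ_h |A_h|/|H|`. -/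
noncomputable def famDensity {H : Type*} [AddCommGroup H] [Fintype H]
    (A : H → Finset H) : ℝ :=
  (∑ h, ((A h).card : ℝ)) / (Fintype.card H : ℝ) ^ 2

/-- The normalized count associated to a family `𝒜 = (A_h)_{h ∈ H}` on `H`:
`Λ(𝒜) = |{(a,a',y,h) : a ∈ A_h, a' ∈ A_h, y ∈ A_{a+a'-h}}| / |H|⁴`. -/
noncomputable def famLambda {H : Type*} [AddCommGroup H] [Fintype H]
    (A : H → Finset H) : ℝ :=
  ((Finset.univ.filter (fun q : H × H × H × H =>
      q.1 ∈ A q.2.2.2 ∧ q.2.1 ∈ A q.2.2.2 ∧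
        q.2.2.1 ∈ A (q.1 + q.2.1 - q.2.2.2))).card : ℝ) /
    (Fintype.card H : ℝ) ^ 4

/-! ### Fourier analysis -/

section Fourier

set_option linter.unusedSectionVars false

variable {H : Type} [AddCommGroup H] [Fintype H]

/-- A perfect `±1`-valued bicharacter on `H`: it identifies `H` with its dual group, the second
variable being the physical one and the first variable the frequency. -/
structure IsPairing (e : H → H → ℝ) : Prop where
  add_right : ∀ γ x y, e γ (x + y) = e γ x * e γ y
  add_left : ∀ γ δ x, e (γ + δ) x = e γ x * e δ x
  val : ∀ γ x, e γ x = 1 ∨ e γ x = -1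
  sum_right : ∀ γ, γ ≠ 0 → ∑ x, e γ x = 0
  sum_left : ∀ x, x ≠ 0 → ∑ γ, e γ x = 0

/-- The nontrivial additive character of `ZMod 2` with real values. -/
noncomputable def zsign (a : ZMod 2) : ℝ := if a = 0 then 1 else -1

lemma zsign_add (a b : ZMod 2) : zsign (a + b) = zsign a * zsign b := by
  unfold zsign
  have h2 : ∀ c : ZMod 2, c = 0 ∨ c = 1 := by decide
  rcases h2 a with rfl | rfl <;> rcases h2 b with rfl | rfl <;>
    simp [show (1 : ZMod 2) + 1 = 0 from rfl]

/-- In coordinates with respect to an `𝔽₂`-basis, `(-1)^⟨γ, x⟩` is a perfect pairing. -/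
lemma exists_pairing (hH : ∀ x : H, x + x = 0) : ∃ e : H → H → ℝ, IsPairing e := by
  let _ : Module (ZMod 2) H := AddCommGroup.zmodModule (n := 2) (fun x => by
    rw [two_nsmul]; exact hH x)
  let b := Module.Free.chooseBasis (ZMod 2) H
  let B : H → H → ZMod 2 := fun γ x => ∑ i, b.repr γ i * b.repr x i
  have Bsymm : ∀ γ x, B γ x = B x γ := fun γ x =>
    Finset.sum_congr rfl fun i _ => mul_comm _ _
  have Badd : ∀ γ x y, B γ (x + y) = B γ x + B γ y := by
    intro γ x y
    simp [B, mul_add, Finset.sum_add_distrib]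
  have addr : ∀ γ x y, zsign (B γ (x + y)) = zsign (B γ x) * zsign (B γ y) := by
    intro γ x y
    rw [Badd, zsign_add]
  have sumr : ∀ γ, γ ≠ 0 → ∑ x, zsign (B γ x) = 0 := by
    intro γ hγ
    obtain ⟨i, hi⟩ : ∃ i, b.repr γ i ≠ 0 := by
      by_contra! h
      apply hγ
      apply b.repr.injective
      ext i
      simp [h i]
    have hb : zsign (B γ (b i)) = -1 := by
      have : B γ (b i) = b.repr γ i := by
        simp [B, Finsupp.single_apply]
      rw [this, zsign, if_neg hi]
    have h1 : ∑ x, zsign (B γ x) = ∑ x, zsign (B γ (x + b i)) :=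
      (Equiv.sum_comp (Equiv.addRight (b i)) (fun x => zsign (B γ x))).symm
    simp only [addr, hb, mul_neg, mul_one, Finset.sum_neg_distrib] at h1
    linarith
  refine ⟨fun γ x => zsign (B γ x), addr, ?_, ?_, sumr, ?_⟩
  · intro γ δ x
    simp only [Bsymm _ x, addr]
  · intro γ x
    simp only [zsign]
    split_ifs <;> simp
  · intro x hx
    simp only [Bsymm _ x]
    exact sumr x hx

namespace IsPairing

variable {e : H → H → ℝ}

lemma zero_right (he : IsPairing e) (γ : H) : e γ 0 = 1 := by
  have h := he.add_right γ 0 0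
  rw [add_zero] at h
  rcases he.val γ 0 with h1 | h1
  · exact h1
  · rw [h1] at h
    norm_num at h

lemma zero_left (he : IsPairing e) (x : H) : e 0 x = 1 := by
  have h := he.add_left 0 0 x
  rw [add_zero] at h
  rcases he.val 0 x with h1 | h1
  · exact h1
  · rw [h1] at h
    norm_num at h

lemma mul_self (he : IsPairing e) (γ x : H) : e γ x * e γ x = 1 := by
  rcases he.val γ x with h1 | h1 <;> rw [h1] <;> norm_num

lemma abs_eq (he : IsPairing e) (γ x : H) : |e γ x| = 1 := by
  rcases he.val γ x with h1 | h1 <;> rw [h1] <;> norm_num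

end IsPairing

/-- The real-valued indicator function of a finite set. -/
noncomputable def ind (A : Finset H) (x : H) : ℝ := if x ∈ A then 1 else 0

/-- The (normalised) Fourier transform of `g` with respect to the pairing `e`. -/
noncomputable def hat (e : H → H → ℝ) (g : H → ℝ) (γ : H) : ℝ :=
  (∑ x, g x * e γ x) / (Fintype.card H : ℝ)

lemma card_pos_real : (0 : ℝ) < (Fintype.card H : ℝ) := by
  exact_mod_cast Fintype.card_pos

lemma sum_ind (A : Finset H) : ∑ x, ind A x = (A.card : ℝ) := by
  simp [ind]

lemma ind_sq (A : Finset H) (x : H) : ind A x ^ 2 = ind A x := by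
  unfold ind; split_ifs <;> norm_num

lemma ind_nonneg (A : Finset H) (x : H) : 0 ≤ ind A x := by
  unfold ind; split_ifs <;> norm_num

variable {e : H → H → ℝ}

lemma pairing_sum_left (hH : ∀ x : H, x + x = 0) (he : IsPairing e) (x y : H) :
    ∑ γ, e γ x * e γ y = if x = y then (Fintype.card H : ℝ) else 0 := by
  split_ifs with h
  · subst h
    simp [he.mul_self]
  · simp only [← he.add_right]
    apply he.sum_left
    intro h0
    apply h
    have := hH y
    exact add_right_cancel (h0.trans this.symm)

lemma hat_inversion (hH : ∀ x : H, x + x = 0) (he : IsPairing e) (g : H → ℝ) (y : H) :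
    g y = ∑ γ, hat e g γ * e γ y := by
  have hN := card_pos_real (H := H)
  have : ∑ γ, hat e g γ * e γ y
      = (∑ x, g x * ∑ γ, e γ x * e γ y) / (Fintype.card H : ℝ) := by
    simp only [hat, Finset.mul_sum, Finset.sum_div, Finset.sum_mul]
    rw [Finset.sum_comm]
    refine Finset.sum_congr rfl fun x _ => Finset.sum_congr rfl fun γ _ => ?_
    ring
  rw [this]
  simp only [pairing_sum_left hH he]
  simp [hN.ne']

lemma parseval (hH : ∀ x : H, x + x = 0) (he : IsPairing e) (g : H → ℝ) :
    ∑ γ, hat e g γ ^ 2 = (∑ x, g x ^ 2) / (Fintype.card H : ℝ) := by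
  have h1 : ∑ x, g x ^ 2 = ∑ x, g x * ∑ γ, hat e g γ * e γ x := by
    refine Finset.sum_congr rfl fun x _ => ?_
    rw [← hat_inversion hH he, sq]
  rw [h1]
  simp only [Finset.mul_sum, Finset.sum_div]
  rw [Finset.sum_comm]
  refine Finset.sum_congr rfl fun γ _ => ?_
  rw [sq]
  nth_rewrite 2 [hat]
  rw [Finset.sum_div, Finset.mul_sum]
  refine Finset.sum_congr rfl fun x _ => ?_
  ring

lemma parseval_ind (hH : ∀ x : H, x + x = 0) (he : IsPairing e) (A : Finset H) :
    ∑ γ, hat e (ind A) γ ^ 2 = (A.card : ℝ) / (Fintype.card H : ℝ) := by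
  rw [parseval hH he]
  simp only [ind_sq, sum_ind]

lemma hat_zero (he : IsPairing e) (g : H → ℝ) :
    hat e g 0 = (∑ x, g x) / (Fintype.card H : ℝ) := by
  simp [hat, he.zero_left]

lemma hat_ind_zero (he : IsPairing e) (A : Finset H) :
    hat e (ind A) 0 = (A.card : ℝ) / (Fintype.card H : ℝ) := by
  rw [hat_zero he, sum_ind]

lemma abs_hat_ind_le (he : IsPairing e) (A : Finset H) (γ : H) :
    |hat e (ind A) γ| ≤ (A.card : ℝ) / (Fintype.card H : ℝ) := by
  have hN := card_pos_real (H := H)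
  unfold hat
  rw [abs_div, abs_of_pos hN]
  gcongr
  rw [← sum_ind]
  refine (Finset.abs_sum_le_sum_abs _ _).trans (Finset.sum_le_sum fun x _ => ?_)
  rw [abs_mul, he.abs_eq, mul_one, abs_of_nonneg (ind_nonneg A x)]

/-- The weighted count of configurations `(a, b, h)` with `a, b ∈ B h`, weighted by
`w h * g (a + b + h)`. -/
noncomputable def form (w g : H → ℝ) (B : H → Finset H) : ℝ :=
  ∑ h, w h * ∑ a, ∑ b, ind (B h) a * ind (B h) b * g (a + b + h)

/-- The count is a sum over frequencies, since `g (a + a' + h) = ∑ γ, ĝ(γ) e(γ, a) e(γ, a') e(γ, h)`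
by Fourier inversion. -/
lemma form_fourier (hH : ∀ x : H, x + x = 0) (he : IsPairing e) (w g : H → ℝ)
    (B : H → Finset H) :
    form w g B / (Fintype.card H : ℝ) ^ 3 =
      ∑ γ, hat e g γ * ((∑ h, w h * hat e (ind (B h)) γ ^ 2 * e γ h)
        / (Fintype.card H : ℝ)) := by
  have hN := card_pos_real (H := H)
  have key : ∀ h, ∑ a, ∑ a', ind (B h) a * ind (B h) a' * g (a + a' + h)
      = (Fintype.card H : ℝ) ^ 2 * ∑ γ, hat e g γ * hat e (ind (B h)) γ ^ 2 * e γ h := by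
    intro h
    have h1 : ∀ γ, (Fintype.card H : ℝ) ^ 2 * hat e (ind (B h)) γ ^ 2
        = ∑ a, ∑ a', (ind (B h) a * e γ a) * (ind (B h) a' * e γ a') := by
      intro γ
      rw [← Finset.sum_mul_sum, hat]
      field_simp
    have h2 : ∀ γ, (Fintype.card H : ℝ) ^ 2 * (hat e g γ * hat e (ind (B h)) γ ^ 2 * e γ h)
        = ∑ a, ∑ a', ind (B h) a * ind (B h) a' * (hat e g γ * e γ (a + a' + h)) := by
      intro γ
      rw [show (Fintype.card H : ℝ) ^ 2 * (hat e g γ * hat e (ind (B h)) γ ^ 2 * e γ h)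
        = ((Fintype.card H : ℝ) ^ 2 * hat e (ind (B h)) γ ^ 2) * (hat e g γ * e γ h) by ring, h1]
      simp only [Finset.sum_mul]
      refine Finset.sum_congr rfl fun a _ => Finset.sum_congr rfl fun a' _ => ?_
      rw [he.add_right, he.add_right]
      ring
    rw [Finset.mul_sum]
    simp only [h2]
    symm
    rw [Finset.sum_comm]
    refine Finset.sum_congr rfl fun a _ => ?_
    rw [Finset.sum_comm]
    refine Finset.sum_congr rfl fun a' _ => ?_
    rw [← Finset.mul_sum, ← hat_inversion hH he]
  unfold form
  simp only [key]
  rw [Finset.sum_div]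
  simp only [Finset.sum_div, Finset.mul_sum]
  rw [Finset.sum_comm]
  refine Finset.sum_congr rfl fun γ _ => Finset.sum_congr rfl fun h _ => ?_
  field_simp

/-- Separating the zero frequency: `form` is bounded below by the contribution of the frequency `0`
minus the absolute contributions of all the others. -/
lemma form_lower (hH : ∀ x : H, x + x = 0) (he : IsPairing e) (w g : H → ℝ)
    (hw : ∀ h, 0 ≤ w h) (B : H → Finset H) :
    hat e g 0 * ((∑ h, w h * ((B h).card / (Fintype.card H : ℝ)) ^ 2) / (Fintype.card H : ℝ))
      - ∑ γ ∈ Finset.univ.erase 0, |hat e g γ| *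
          ((∑ h, w h * hat e (ind (B h)) γ ^ 2) / (Fintype.card H : ℝ))
      ≤ form w g B / (Fintype.card H : ℝ) ^ 3 := by
  have hN := card_pos_real (H := H)
  rw [form_fourier hH he, ← Finset.add_sum_erase Finset.univ
    (fun γ => hat e g γ * ((∑ h, w h * hat e (ind (B h)) γ ^ 2 * e γ h)
        / (Fintype.card H : ℝ))) (Finset.mem_univ (0 : H))]
  simp only [he.zero_left, hat_ind_zero he, mul_one]
  rw [sub_eq_add_neg]
  gcongr
  rw [← Finset.sum_neg_distrib]
  refine Finset.sum_le_sum fun γ _ => ?_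
  rw [neg_le_iff_add_nonneg, add_comm, ← neg_le_iff_add_nonneg]
  refine (neg_le_abs _).trans ?_
  rw [abs_mul, abs_div, abs_of_pos hN]
  gcongr
  refine (Finset.abs_sum_le_sum_abs _ _).trans (Finset.sum_le_sum fun h _ => ?_)
  rw [abs_mul, he.abs_eq, mul_one, abs_of_nonneg (mul_nonneg (hw h) (sq_nonneg _))]

end Fourier

/-! ### Annihilators, cosets and restriction of families -/

section Cosets

set_option linter.unusedSectionVars false

variable {H : Type} [AddCommGroup H] [Fintype H] {e : H → H → ℝ}

/-- The annihilator of a set of frequencies. -/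
def annih (he : IsPairing e) (T : Finset H) : AddSubgroup H where
  carrier := {x | ∀ γ ∈ T, e γ x = 1}
  zero_mem' := fun γ _ => he.zero_right γ
  add_mem' := by
    intro x y hx hy γ hγ
    rw [he.add_right, hx γ hγ, hy γ hγ, one_mul]
  neg_mem' := by
    intro x hx γ hγ
    have h := he.add_right γ x (-x)
    rw [add_neg_cancel, he.zero_right, hx γ hγ, one_mul] at h
    exact h.symm

lemma mem_annih (he : IsPairing e) (T : Finset H) (x : H) :
    x ∈ annih he T ↔ ∀ γ ∈ T, e γ x = 1 := Iff.rfl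

/-- The part of `X` in the coset `t + V`, translated back into `V`. -/
noncomputable def slice (V : AddSubgroup H) (t : H) (X : Finset H) : Finset V :=
  Finset.univ.filter fun b : V => (b : H) + t ∈ X

lemma mem_slice (V : AddSubgroup H) (t : H) (X : Finset H) (b : V) :
    b ∈ slice V t X ↔ (b : H) + t ∈ X := by simp [slice]

lemma slice_card (V : AddSubgroup H) (t : H) (X : Finset H) :
    ((slice V t X).card : ℝ) = ∑ v : V, ind X (v + t) := by
  simp [slice, ind]

lemma sum_subgroup (V : AddSubgroup H) (g : H → ℝ) :
    ∑ v : V, g v = ∑ x, if x ∈ V then g x else 0 := by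
  rw [← Finset.sum_filter]
  exact (Finset.sum_subtype (Finset.univ.filter (· ∈ V)) (by simp) g).symm

/-- The sum of `g` over the coset `t + ker γ`, by expanding the indicator function of the coset as
`(1 + e γ t * e γ x) / 2`. -/
lemma sum_coset (he : IsPairing e) (γ t : H) (g : H → ℝ) :
    ∑ v : annih he {γ}, g (v + t)
      = (∑ x, g x + e γ t * ((Fintype.card H : ℝ) * hat e g γ)) / 2 := by
  have hN := card_pos_real (H := H)
  rw [sum_subgroup (annih he {γ}) (fun x => g (x + t))]
  have h1 : ∀ x, (if x ∈ annih he {γ} then g (x + t) else 0)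
      = g (x + t) * ((1 + e γ (x + t) * e γ t) / 2) := by
    intro x
    rw [he.add_right, mul_assoc, he.mul_self, mul_one]
    simp only [mem_annih, Finset.mem_singleton, forall_eq]
    rcases he.val γ x with h | h <;> rw [h] <;> norm_num
  simp only [h1]
  have h2 := Equiv.sum_comp (Equiv.addRight t) (fun y => g y * ((1 + e γ y * e γ t) / 2))
  simp only [Equiv.coe_addRight] at h2
  rw [h2, hat, mul_div_cancel₀ _ hN.ne', Finset.mul_sum, ← Finset.sum_add_distrib,
    Finset.sum_div]
  refine Finset.sum_congr rfl fun y _ => ?_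
  ring

lemma exists_sign (he : IsPairing e) {γ : H} (hγ : γ ≠ 0) : ∃ t, e γ t = -1 := by
  by_contra! h
  have h1 : ∀ x, e γ x = 1 := fun x => (he.val γ x).resolve_right (h x)
  have h2 := he.sum_right γ hγ
  have hN := card_pos_real (H := H)
  simp [h1] at h2

/-- Of the two cosets of the kernel of `γ`, one carries the excess `|ĝ(γ)|` of the mass of `g`. -/
lemma exists_coset (he : IsPairing e) {γ : H} (hγ : γ ≠ 0)
    (g : H → ℝ) : ∃ t, ∑ v : annih he {γ}, g (v + t)
      = (∑ x, g x + (Fintype.card H : ℝ) * |hat e g γ|) / 2 := by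
  rcases le_total 0 (hat e g γ) with h | h
  · refine ⟨0, ?_⟩
    rw [sum_coset he, he.zero_right, abs_of_nonneg h, one_mul]
  · obtain ⟨t, ht⟩ := exists_sign he hγ
    refine ⟨t, ?_⟩
    rw [sum_coset he, ht, abs_of_nonpos h]
    ring

lemma exists_slice (he : IsPairing e) {γ : H} (hγ : γ ≠ 0)
    (X : Finset H) : ∃ t, ((slice (annih he {γ}) t X).card : ℝ)
      = (X.card + (Fintype.card H : ℝ) * |hat e (ind X) γ|) / 2 := by
  obtain ⟨t, ht⟩ := exists_coset he hγ (ind X)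
  exact ⟨t, by rw [slice_card, ht, sum_ind]⟩

lemma card_ker (he : IsPairing e) {γ : H} (hγ : γ ≠ 0) :
    (Fintype.card (annih he {γ}) : ℝ) = (Fintype.card H : ℝ) / 2 := by
  have h := sum_coset he γ 0 (fun _ => 1)
  have h0 : hat e (fun _ => 1) γ = 0 := by
    simp [hat, he.sum_right γ hγ]
  rw [h0] at h
  simpa using h

lemma index_ker (he : IsPairing e) {γ : H} (hγ : γ ≠ 0) :
    (annih he {γ}).index = 2 := by
  have h1 := card_ker he hγ
  have h2 := (annih he {γ}).card_mul_index
  rw [Nat.card_eq_fintype_card, Nat.card_eq_fintype_card] at h2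
  have hN := card_pos_real (H := H)
  have h3 : (Fintype.card (annih he {γ}) : ℝ) * ((annih he {γ}).index : ℝ)
      = (Fintype.card H : ℝ) := by exact_mod_cast h2
  rw [h1] at h3
  have : ((annih he {γ}).index : ℝ) = 2 := by
    have : (Fintype.card H : ℝ) * (((annih he {γ}).index : ℝ) - 2) = 0 := by linarith
    rcases mul_eq_zero.mp this with h | h <;> linarith
  exact_mod_cast this

lemma sub_eq_add_of_two (hH : ∀ x : H, x + x = 0) (a b : H) : a - b = a + b := by
  rw [sub_eq_add_neg, neg_eq_of_add_eq_zero_right (hH b)]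

/-- Translating the fibres and the index set of a family, and restricting to a subgroup, does not
create configurations; here exponent `2` matters since `a + a'` is unchanged when both are
translated by the same element. -/
lemma lambda_slice (hH : ∀ x : H, x + x = 0) (V : AddSubgroup H) (A : H → Finset H) (u : H)
    (t : H → H) :
    famLambda (fun v : V => slice V (t (v + u)) (A (v + u))) * (Fintype.card V : ℝ) ^ 4
      ≤ famLambda A * (Fintype.card H : ℝ) ^ 4 := by
  have hN := card_pos_real (H := H)
  have hV := card_pos_real (H := V)
  unfold famLambda
  rw [div_mul_cancel₀ _ (by positivity), div_mul_cancel₀ _ (by positivity)]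
  norm_cast
  have key : ∀ (b b' v : H), b + t (v + u) + (b' + t (v + u)) - (v + u) = b + b' - v + u := by
    intro b b' v
    have h1 := hH (t (v + u))
    have h2 := hH u
    calc b + t (v + u) + (b' + t (v + u)) - (v + u)
        = b + b' - v + (t (v + u) + t (v + u)) - u := by abel
      _ = b + b' - v + u := by rw [h1, add_zero, sub_eq_add_of_two hH]
  refine Finset.card_le_card_of_injOn
    (fun q : V × V × V × V =>
      (((q.1 : H) + t (q.2.2.2 + u), (q.2.1 : H) + t (q.2.2.2 + u),
        (q.2.2.1 : H) + t ((q.1 : H) + q.2.1 - q.2.2.2 + u), (q.2.2.2 : H) + u) :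
          H × H × H × H)) ?_ ?_
  · rintro ⟨b, b', y, v⟩ hq
    simp only [Finset.coe_filter, Finset.mem_univ, true_and, Set.mem_ofPred_eq, mem_slice,
      AddSubgroup.coe_add, AddSubgroup.coe_sub] at hq ⊢
    rw [key]
    exact hq
  · rintro ⟨b, b', y, v⟩ _ ⟨c, c', z, w⟩ _ h
    simp only [Prod.mk.injEq, add_left_inj, SetLike.coe_eq_coe] at h
    obtain ⟨h1, h2, h3, rfl⟩ := h
    simp only [add_left_inj, SetLike.coe_eq_coe] at h1 h2
    subst h1 h2
    simpa using h3

/-- The number of `(h, a, a')` with `h ∈ W`, `a, a' ∈ B h` and `a + a' + h ∈ W`. -/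
noncomputable def cnt (W : Finset H) (B : H → Finset H) : ℕ :=
  (Finset.univ.filter (fun q : H × H × H =>
    q.1 ∈ W ∧ q.2.1 ∈ B q.1 ∧ q.2.2 ∈ B q.1 ∧ q.2.1 + q.2.2 + q.1 ∈ W)).card

/-- The analogue of `lambda_slice` for `cnt`. -/
lemma cnt_slice (hH : ∀ x : H, x + x = 0) (V : AddSubgroup H) (W : Finset H)
    (B : H → Finset H) (u : H) (t : H → H) :
    cnt (slice V u W) (fun v : V => slice V (t (v + u)) (B (v + u))) ≤ cnt W B := by
  unfold cnt
  have key : ∀ (b b' v : H), b + t (v + u) + (b' + t (v + u)) + (v + u) = b + b' + v + u := by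
    intro b b' v
    have h1 := hH (t (v + u))
    calc b + t (v + u) + (b' + t (v + u)) + (v + u)
        = b + b' + v + (t (v + u) + t (v + u)) + u := by abel
      _ = b + b' + v + u := by rw [h1, add_zero]
  refine Finset.card_le_card_of_injOn
    (fun q : V × V × V =>
      (((q.1 : H) + u, (q.2.1 : H) + t (q.1 + u), (q.2.2 : H) + t (q.1 + u)) : H × H × H)) ?_ ?_
  · rintro ⟨v, b, b'⟩ hq
    simp only [Finset.coe_filter, Finset.mem_univ, true_and, Set.mem_ofPred_eq, mem_slice,
      AddSubgroup.coe_add] at hq ⊢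
    rw [key]
    exact hq
  · rintro ⟨v, b, b'⟩ _ ⟨w, c, c'⟩ _ h
    simp only [Prod.mk.injEq, add_left_inj, SetLike.coe_eq_coe] at h
    obtain ⟨rfl, h1, h2⟩ := h
    simp only [add_left_inj, SetLike.coe_eq_coe] at h1 h2
    subst h1 h2
    rfl

lemma cnt_eq_form (W : Finset H) (B : H → Finset H) :
    (cnt W B : ℝ) = form (ind W) (ind W) B := by
  unfold cnt form
  rw [Finset.card_filter]
  push_cast
  rw [Fintype.sum_prod_type]
  refine Finset.sum_congr rfl fun h _ => ?_
  rw [Fintype.sum_prod_type, Finset.mul_sum]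
  refine Finset.sum_congr rfl fun a _ => ?_
  rw [Finset.mul_sum]
  refine Finset.sum_congr rfl fun a' _ => ?_
  unfold ind
  by_cases h1 : h ∈ W <;> by_cases h2 : a ∈ B h <;> by_cases h3 : a' ∈ B h <;>
    by_cases h4 : a + a' + h ∈ W <;> simp [h1, h2, h3, h4]

lemma lambda_eq_form (hH : ∀ x : H, x + x = 0) (A : H → Finset H) :
    famLambda A
      = form (fun _ => 1) (fun h => ((A h).card : ℝ) / (Fintype.card H : ℝ)) A
        / (Fintype.card H : ℝ) ^ 3 := by
  have hN := card_pos_real (H := H)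
  have h0 : form (fun _ => 1) (fun h => ((A h).card : ℝ) / (Fintype.card H : ℝ)) A
      = (∑ h, ∑ a, ∑ a', ∑ y, ind (A h) a * ind (A h) a' * ind (A (a + a' + h)) y)
        / (Fintype.card H : ℝ) := by
    unfold form
    simp only [one_mul, Finset.sum_div]
    refine Finset.sum_congr rfl fun h _ => Finset.sum_congr rfl fun a _ =>
      Finset.sum_congr rfl fun a' _ => ?_
    rw [← Finset.sum_div, ← Finset.mul_sum, sum_ind]
    ring
  rw [h0, div_div, ← pow_succ', famLambda]
  congr 1
  rw [Finset.card_filter]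
  push_cast
  simp only [Fintype.sum_prod_type]
  symm
  rw [Finset.sum_comm]
  refine Finset.sum_congr rfl fun a _ => ?_
  rw [Finset.sum_comm]
  refine Finset.sum_congr rfl fun a' _ => ?_
  rw [Finset.sum_comm]
  refine Finset.sum_congr rfl fun y _ => Finset.sum_congr rfl fun h _ => ?_
  simp only [sub_eq_add_of_two hH, ind]
  by_cases h2 : a ∈ A h <;> by_cases h3 : a' ∈ A h <;>
    by_cases h4 : y ∈ A (a + a' + h) <;> simp [h2, h3, h4]

end Cosets

/-! ### Density increments -/

section Increment

variable {H : Type} [AddCommGroup H] [Fintype H] {e : H → H → ℝ}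

/-- The density increment: passing to the kernel of `γ` and choosing the better coset for every
fibre gains `|hat e (ind (A h)) γ|` on the fibre over `h`, hence the average of these quantities;
choosing the better coset of base points gains the `γ`-th coefficient of the density function. -/
lemma increment (hH : ∀ x : H, x + x = 0) (he : IsPairing e) {γ : H} (hγ : γ ≠ 0)
    (A : H → Finset H) (η : ℝ)
    (hη : η ≤ |hat e (fun h => ((A h).card : ℝ) / (Fintype.card H : ℝ)) γ| ∨
      η ≤ (∑ h, |hat e (ind (A h)) γ|) / (Fintype.card H : ℝ)) :
    ∃ H' : AddSubgroup H, H'.index = 2 ∧ ∃ A' : H' → Finset H',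
      famDensity A' ≥ famDensity A + η ∧
      famLambda A ≥ ((2 : ℝ) ^ 4)⁻¹ * famLambda A' := by
  have hN := card_pos_real (H := H)
  have hV := card_ker he hγ
  set N : ℝ := (Fintype.card H : ℝ) with hNdef
  choose t ht using fun h => exists_slice he hγ (A h)
  refine ⟨annih he {γ}, index_ker he hγ, ?_⟩
  set V := annih he {γ} with hVdef
  have hdens : famDensity A = (∑ h, ((A h).card : ℝ)) / N ^ 2 := rfl
  have har : ∀ S : ℝ, N / 2 * (S / N ^ 2 + η) = (S / N + N * η) / 2 := by
    intro S
    field_simp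
  suffices hs : ∃ u, ∑ v : V, (((A (v + u)).card : ℝ) / N + |hat e (ind (A (v + u))) γ|)
      ≥ N / 2 * (famDensity A + η) by
    obtain ⟨u, hu⟩ := hs
    refine ⟨fun v => slice V (t (v + u)) (A (v + u)), ?_, ?_⟩
    · have hd : famDensity (fun v : V => slice V (t (v + u)) (A (v + u)))
          = (∑ v : V, ((slice V (t (v + u)) (A (v + u))).card : ℝ))
            / (Fintype.card V : ℝ) ^ 2 := rfl
      rw [ge_iff_le, hd, hV, le_div_iff₀ (by positivity)]
      simp only [ht]
      have h1 : ∑ v : V, (((A (v + u)).card : ℝ) + N * |hat e (ind (A (v + u))) γ|) / 2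
          = N / 2 * ∑ v : V, (((A (v + u)).card : ℝ) / N + |hat e (ind (A (v + u))) γ|) := by
        rw [Finset.mul_sum]
        refine Finset.sum_congr rfl fun v _ => ?_
        field_simp
      rw [h1]
      have h2 := mul_le_mul_of_nonneg_left hu (show 0 ≤ N / 2 by positivity)
      nlinarith [h2]
    · have h1 := lambda_slice hH V A u t
      rw [hV, ← hNdef] at h1
      have h3 : (0 : ℝ) < N ^ 4 := by positivity
      rw [ge_iff_le, ← mul_le_mul_iff_left₀ h3]
      refine le_trans (le_of_eq ?_) h1
      ring
  rcases hη with hη | hη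
  · obtain ⟨u, hu⟩ := exists_coset he hγ (fun h => ((A h).card : ℝ) / N)
    refine ⟨u, ?_⟩
    have h1 : ∑ v : V, ((A (v + u)).card : ℝ) / N ≤
        ∑ v : V, (((A (v + u)).card : ℝ) / N + |hat e (ind (A (v + u))) γ|) :=
      Finset.sum_le_sum fun v _ => le_add_of_nonneg_right (abs_nonneg _)
    refine le_trans ?_ h1
    rw [hu, hdens, ← Finset.sum_div, ← hNdef]
    rw [har]
    gcongr
  · obtain ⟨u, hu⟩ := exists_coset he hγ
      (fun h => ((A h).card : ℝ) / N + |hat e (ind (A h)) γ|)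
    refine ⟨u, ?_⟩
    rw [hu, hdens, Finset.sum_add_distrib, ← Finset.sum_div, ← hNdef]
    rw [ge_iff_le, har]
    have h1 := (le_div_iff₀ hN).mp hη
    have h2 : 0 ≤ N * |hat e (fun h => ((A h).card : ℝ) / N + |hat e (ind (A h)) γ|) γ| :=
      mul_nonneg hN.le (abs_nonneg _)
    linarith

/-- If `|B h| ≥ ρ |H|` over a set `W` of density `ω`, then the number of configurations is at
least `(ρ² / 2) ω ^ κ |H|³` once `κ ρ ≥ 14`. Either the zero frequency dominates, or `W` has density
at least `(1 + ρ / 2) ω` on a coset of an index two subgroup; then the fibres may be cut by suitable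
cosets without losing relative density, and Bernoulli's inequality `(1 + ρ / 2) ^ κ ≥ 8` pays for
the factor `8` lost in `|H|³`. -/
lemma cnt_lower (ρ : ℝ) (hρ : 0 < ρ) (κ : ℕ) (hκ2 : 2 ≤ κ) (hκ : 14 ≤ κ * ρ) :
    ∀ (n : ℕ) (H : Type) [AddCommGroup H] [Fintype H], Fintype.card H ≤ n →
      (∀ x : H, x + x = 0) → ∀ (W : Finset H) (B : H → Finset H) (ω : ℝ), 0 ≤ ω →
      ω * (Fintype.card H : ℝ) ≤ W.card →
      (∀ h ∈ W, ρ * (Fintype.card H : ℝ) ≤ (B h).card) →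
      ρ ^ 2 / 2 * ω ^ κ * (Fintype.card H : ℝ) ^ 3 ≤ cnt W B := by
  intro n
  induction n with
  | zero =>
    intro H _ _ hn
    exact absurd (Fintype.card_pos (α := H)) (by omega)
  | succ n ih =>
    intro H _ _ hn hH W B ω' hω' hW' hB
    have hN := card_pos_real (H := H)
    set N : ℝ := (Fintype.card H : ℝ) with hNdef
    obtain ⟨e, he⟩ := exists_pairing hH
    -- the exact density of `W`
    set ω : ℝ := W.card / N with hω
    have hωω : ω' ≤ ω := (le_div_iff₀ hN).mpr hW'
    have hω0 : 0 ≤ ω := hω'.trans hωω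
    have hω1 : ω ≤ 1 := by
      rw [hω, div_le_one hN, hNdef]
      exact_mod_cast Finset.card_le_univ W
    suffices hs : ρ ^ 2 / 2 * ω ^ κ * N ^ 3 ≤ cnt W B by
      refine le_trans ?_ hs
      gcongr
    by_cases hc : ∀ γ, γ ≠ 0 → |hat e (ind W) γ| ≤ ω * ρ / 2
    · have h1 := form_lower hH he (ind W) (ind W) (ind_nonneg W) B
      rw [← cnt_eq_form, hat_ind_zero he, ← hNdef, ← hω, le_div_iff₀ (by positivity)] at h1
      refine le_trans ?_ h1
      have herr : ∑ γ ∈ Finset.univ.erase 0, |hat e (ind W) γ| *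
          ((∑ h, ind W h * hat e (ind (B h)) γ ^ 2) / N)
          ≤ ω * ρ / 2 * ((∑ h, ind W h * ((B h).card / N)) / N) := by
        calc _ ≤ ∑ γ ∈ Finset.univ.erase 0, ω * ρ / 2 *
              ((∑ h, ind W h * hat e (ind (B h)) γ ^ 2) / N) := by
              refine Finset.sum_le_sum fun γ hγ => ?_
              refine mul_le_mul_of_nonneg_right (hc γ (Finset.ne_of_mem_erase hγ)) ?_
              exact div_nonneg (Finset.sum_nonneg fun h _ =>
                mul_nonneg (ind_nonneg W h) (sq_nonneg _)) hN.le
          _ ≤ ∑ γ, ω * ρ / 2 * ((∑ h, ind W h * hat e (ind (B h)) γ ^ 2) / N) := by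
              refine Finset.sum_le_sum_of_subset_of_nonneg (Finset.subset_univ _) fun γ _ _ => ?_
              have := Finset.sum_nonneg (s := Finset.univ) fun h _ =>
                mul_nonneg (ind_nonneg W h) (sq_nonneg (hat e (ind (B h)) γ))
              positivity
          _ = _ := by
              rw [← Finset.mul_sum, ← Finset.sum_div, Finset.sum_comm]
              simp only [← Finset.mul_sum, parseval_ind hH he, ← hNdef]
      have hsq : ρ * ((∑ h, ind W h * ((B h).card / N)) / N)
          ≤ (∑ h, ind W h * ((B h).card / N) ^ 2) / N := by
        rw [← mul_div_assoc, Finset.mul_sum]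
        refine div_le_div_of_nonneg_right (Finset.sum_le_sum fun h _ => ?_) hN.le
        by_cases hh : h ∈ W
        · have := (le_div_iff₀ hN).mpr (hB h hh)
          simp only [ind, if_pos hh, one_mul, sq]
          gcongr
        · simp [ind, hh]
      have hlow : ρ * ω ≤ (∑ h, ind W h * ((B h).card / N)) / N := by
        rw [hω, ← mul_div_assoc, ← sum_ind, Finset.mul_sum]
        refine div_le_div_of_nonneg_right (Finset.sum_le_sum fun h _ => ?_) hN.le
        by_cases hh : h ∈ W
        · have := (le_div_iff₀ hN).mpr (hB h hh)
          simpa [ind, hh] using this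
        · simp [ind, hh]
      set P := (∑ h, ind W h * ((B h).card / N)) / N
      set Q := (∑ h, ind W h * ((B h).card / N) ^ 2) / N
      have hpow : ω ^ κ ≤ ω ^ 2 := pow_le_pow_of_le_one hω0 hω1 hκ2
      gcongr
      calc ρ ^ 2 / 2 * ω ^ κ ≤ ρ ^ 2 / 2 * ω ^ 2 := by gcongr
        _ = ω / 2 * (ρ * (ρ * ω)) := by ring
        _ ≤ ω / 2 * (ρ * P) := by gcongr
        _ = ω * (ρ * P) - ω * ρ / 2 * P := by ring
        _ ≤ ω * Q - ω * ρ / 2 * P := by gcongr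
        _ ≤ _ := by gcongr
    · push Not at hc
      obtain ⟨γ, hγ, hbig⟩ := hc
      have hV := card_ker he hγ
      obtain ⟨u, hu⟩ := exists_slice he hγ W
      choose t ht using fun h => exists_slice he hγ (B h)
      set V := annih he {γ} with hVdef
      have hVN : Fintype.card V ≤ n := by
        have : (Fintype.card V : ℝ) < Fintype.card H := by rw [hV]; linarith
        have : Fintype.card V < Fintype.card H := by exact_mod_cast this
        omega
      have h1 := ih V hVN (fun x => Subtype.ext (hH x)) (slice V u W)
        (fun v : V => slice V (t (v + u)) (B (v + u))) (ω * (1 + ρ / 2)) (by positivity)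
        (by
          rw [hV, hu, ← hNdef]
          have h2 : (W.card : ℝ) = ω * N := by rw [hω]; field_simp
          rw [h2]
          nlinarith [mul_le_mul_of_nonneg_left hbig.le hN.le])
        (by
          intro v hv
          rw [mem_slice] at hv
          rw [hV, ht]
          have h3 := hB _ hv
          have h4 : 0 ≤ (Fintype.card H : ℝ) * |hat e (ind (B (v + u))) γ| := by positivity
          linarith)
      have h2 : (cnt (slice V u W) (fun v : V => slice V (t (v + u)) (B (v + u))) : ℝ)
          ≤ cnt W B := by exact_mod_cast cnt_slice hH V W B u t
      refine le_trans ?_ (h1.trans h2)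
      have hbern : (8 : ℝ) ≤ (1 + ρ / 2) ^ κ := by
        have := one_add_mul_le_pow (a := ρ / 2) (by linarith) κ
        linarith
      rw [hV, ← hNdef, mul_pow]
      calc ρ ^ 2 / 2 * ω ^ κ * N ^ 3 = ρ ^ 2 / 2 * (ω ^ κ * 8) * (N / 2) ^ 3 := by ring
        _ ≤ _ := by gcongr

end Increment

/-! ### Chang's theorem and the structured case -/

section Chang

set_option linter.unusedSectionVars false

variable {H : Type} [AddCommGroup H] [Fintype H] {e : H → H → ℝ}

/-- Linear independence over `𝔽₂`, phrased through subset sums. -/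
def Indep (T : Finset H) : Prop := ∀ T' ⊆ T, ∑ i ∈ T', i = 0 → T' = ∅

lemma Indep.zero_notMem {T : Finset H} (hT : Indep T) : (0 : H) ∉ T := by
  intro h
  have := hT {0} (by simpa using h) (by simp)
  simp at this

lemma pairing_sum (he : IsPairing e) (T : Finset H) (x : H) :
    e (∑ i ∈ T, i) x = ∏ i ∈ T, e i x := by
  induction T using Finset.induction_on with
  | empty => simp [he.zero_left]
  | insert a s ha ih => rw [Finset.sum_insert ha, Finset.prod_insert ha, he.add_left, ih]

/-- Independent characters behave as independent random signs: the mean of a Riesz-type product is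
the product of the means. -/
lemma riesz (he : IsPairing e) {T : Finset H} (hT : Indep T) (c : H → ℝ) (p : ℝ) :
    ∑ x, ∏ i ∈ T, (c i * e i x + p) = (Fintype.card H : ℝ) * p ^ T.card := by
  simp only [Finset.prod_add]
  rw [Finset.sum_comm, Finset.sum_eq_single ∅]
  · simp
  · intro T' hT' hne
    have h0 : ∑ i ∈ T', i ≠ 0 := fun h => hne (hT T' (Finset.mem_powerset.mp hT') h)
    simp only [Finset.prod_mul_distrib, ← pairing_sum he]
    rw [← Finset.sum_mul, ← Finset.mul_sum, he.sum_right _ h0]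
    simp
  · intro h
    simp at h

/-- Chang's theorem over `𝔽₂`: an independent set of frequencies at which the indicator function of
`A` is at least `ε` times its density has at most `2 ε⁻² log (|H| / |A|)` elements. -/
lemma chang (he : IsPairing e) {T : Finset H} (hT : Indep T) (A : Finset H) (hA : A.Nonempty)
    (ε : ℝ) (hε : 0 ≤ ε)
    (hS : ∀ γ ∈ T, ε * ((A.card : ℝ) / (Fintype.card H : ℝ)) ≤ |hat e (ind A) γ|) :
    T.card * ε ^ 2 / 2 ≤ Real.log ((Fintype.card H : ℝ) / A.card) := by
  have hN := card_pos_real (H := H)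
  have hAc : (0 : ℝ) < A.card := by exact_mod_cast hA.card_pos
  set N : ℝ := (Fintype.card H : ℝ) with hNdef
  let c : H → ℝ := fun γ => if 0 ≤ hat e (ind A) γ then 1 else -1
  have hc : ∀ γ, c γ = 1 ∨ c γ = -1 := by
    intro γ
    simp only [c]
    split_ifs <;> simp
  have hch : ∀ γ, c γ * hat e (ind A) γ = |hat e (ind A) γ| := by
    intro γ
    simp only [c]
    split_ifs with h
    · rw [one_mul, abs_of_nonneg h]
    · rw [abs_of_neg (not_le.mp h)]; ring
  let X : H → ℝ := fun x => ∑ i ∈ T, c i * e i x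
  have hexp : ∀ x, Real.exp (ε * X x)
      = ∏ i ∈ T, ((c i * Real.sinh ε) * e i x + Real.cosh ε) := by
    intro x
    simp only [X, Finset.mul_sum]
    rw [Real.exp_sum]
    refine Finset.prod_congr rfl fun i _ => ?_
    rcases hc i with h | h <;> rcases he.val i x with h' | h' <;> rw [h, h']
    · rw [← Real.cosh_add_sinh]; ring_nf
    · rw [show ε * (1 * -1) = -ε by ring, ← Real.cosh_sub_sinh]; ring
    · rw [show ε * (-1 * 1) = -ε by ring, ← Real.cosh_sub_sinh]; ring
    · rw [show ε * (-1 * -1) = ε by ring, ← Real.cosh_add_sinh]; ring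
  have htot : ∑ x, Real.exp (ε * X x) ≤ N * Real.exp (T.card * ε ^ 2 / 2) := by
    simp only [hexp]
    rw [riesz he hT (fun i => c i * Real.sinh ε)]
    gcongr
    calc Real.cosh ε ^ T.card ≤ Real.exp (ε ^ 2 / 2) ^ T.card := by
          gcongr
          exact Real.cosh_le_exp_half_sq ε
      _ = _ := by rw [← Real.exp_nat_mul]; congr 1; ring
  have hsumX : ∑ x ∈ A, X x = N * ∑ i ∈ T, |hat e (ind A) i| := by
    simp only [X]
    rw [Finset.sum_comm, Finset.mul_sum]
    refine Finset.sum_congr rfl fun i _ => ?_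
    rw [← hch, ← Finset.mul_sum, hat]
    have : ∑ x, ind A x * e i x = ∑ x ∈ A, e i x := by
      simp [ind, Finset.sum_ite_mem]
    rw [this, ← hNdef]
    field_simp
  have hm : T.card * ε * A.card ≤ ∑ x ∈ A, X x := by
    rw [hsumX]
    have : ∑ i ∈ T, ε * ((A.card : ℝ) / N) ≤ ∑ i ∈ T, |hat e (ind A) i| :=
      Finset.sum_le_sum hS
    rw [Finset.sum_const, nsmul_eq_mul] at this
    calc T.card * ε * A.card = N * (T.card * (ε * ((A.card : ℝ) / N))) := by field_simp
      _ ≤ _ := by gcongr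
  -- convexity of `exp`, through its tangent line at `m`
  have hlow : A.card * Real.exp (T.card * ε ^ 2) ≤ ∑ x, Real.exp (ε * X x) := by
    set m : ℝ := T.card * ε ^ 2 with hmdef
    calc A.card * Real.exp m
        ≤ Real.exp m * (A.card + (ε * ∑ x ∈ A, X x - A.card * m)) := by
          have : 0 ≤ ε * ∑ x ∈ A, X x - A.card * m := by
            have := mul_le_mul_of_nonneg_left hm hε
            rw [hmdef]
            linarith
          nlinarith [Real.exp_pos m]
      _ = ∑ x ∈ A, Real.exp m * (ε * X x - m + 1) := by
          rw [← Finset.mul_sum, Finset.sum_add_distrib, Finset.sum_sub_distrib, ← Finset.mul_sum]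
          simp
          ring
      _ ≤ ∑ x ∈ A, Real.exp (ε * X x) := by
          refine Finset.sum_le_sum fun x _ => ?_
          calc Real.exp m * (ε * X x - m + 1) ≤ Real.exp m * Real.exp (ε * X x - m) := by
                gcongr
                exact Real.add_one_le_exp _
            _ = _ := by rw [← Real.exp_add]; congr 1; ring
      _ ≤ _ := Finset.sum_le_sum_of_subset_of_nonneg (Finset.subset_univ _)
          fun x _ _ => (Real.exp_pos _).le
  have h1 := hlow.trans htot
  rw [Real.le_log_iff_exp_le (by positivity), le_div_iff₀ hAc]
  have h2 : Real.exp (T.card * ε ^ 2)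
      = Real.exp (T.card * ε ^ 2 / 2) * Real.exp (T.card * ε ^ 2 / 2) := by
    rw [← Real.exp_add]; congr 1; ring
  rw [h2] at h1
  have h3 := Real.exp_pos (T.card * ε ^ 2 / 2)
  nlinarith

/-- A maximal independent subset of `S` spans `S`. -/
lemma exists_indep_spanning (hH : ∀ x : H, x + x = 0) (S : Finset H) :
    ∃ T ⊆ S, Indep T ∧ ∀ γ ∈ S, ∃ T' ⊆ T, ∑ i ∈ T', i = γ := by
  obtain ⟨T, hT, hmax⟩ := Finset.exists_max_image (S.powerset.filter Indep) Finset.card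
    ⟨∅, by simp [Indep]⟩
  rw [Finset.mem_filter, Finset.mem_powerset] at hT
  refine ⟨T, hT.1, hT.2, fun γ hγ => ?_⟩
  by_cases hγT : γ ∈ T
  · exact ⟨{γ}, by simpa using hγT, by simp⟩
  have hn : ¬ Indep (insert γ T) := by
    intro h
    have := hmax (insert γ T) (by
      rw [Finset.mem_filter, Finset.mem_powerset]
      exact ⟨Finset.insert_subset hγ hT.1, h⟩)
    rw [Finset.card_insert_of_notMem hγT] at this
    omega
  unfold Indep at hn
  push Not at hn
  obtain ⟨T', hT', hs, hne⟩ := hn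
  by_cases hmem : γ ∈ T'
  · refine ⟨T'.erase γ, ?_, ?_⟩
    · intro x hx
      rw [Finset.mem_erase] at hx
      exact (Finset.mem_insert.mp (hT' hx.2)).resolve_left hx.1
    · rw [← Finset.add_sum_erase _ _ hmem] at hs
      exact add_left_cancel (hs.trans (hH γ).symm)
  · exact absurd (hT.2 T' (fun x hx => (Finset.mem_insert.mp (hT' hx)).resolve_left
      (fun h => hmem (h ▸ hx))) hs) hne.ne_empty

lemma prod_annih (he : IsPairing e) (T : Finset H) (x : H) :
    ∏ γ ∈ T, (1 + e γ x) = if x ∈ annih he T then (2 : ℝ) ^ T.card else 0 := by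
  split_ifs with h
  · rw [mem_annih] at h
    rw [Finset.prod_congr rfl (fun γ hγ => by rw [h γ hγ]), Finset.prod_const]
    norm_num
  · rw [mem_annih] at h
    push Not at h
    obtain ⟨γ, hγ, hne⟩ := h
    refine Finset.prod_eq_zero hγ ?_
    rw [(he.val γ x).resolve_left hne]
    norm_num

lemma card_annih (he : IsPairing e) {T : Finset H} (hT : Indep T) :
    (2 : ℝ) ^ T.card * (Fintype.card (annih he T) : ℝ) = (Fintype.card H : ℝ) := by
  have h1 := riesz he hT (fun _ => 1) 1
  have h2 := sum_subgroup (annih he T) (fun _ => (2 : ℝ) ^ T.card)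
  simp only [one_mul, one_pow, mul_one, add_comm _ (1 : ℝ), prod_annih he] at h1
  rw [← h2] at h1
  simp at h1
  linarith

/-- If the frequencies spanned by an independent set `T` carry a proportion `ρ` of the `L²` mass
of `A`, then `A` has density at least `ρ` on some coset of the annihilator of `T`. -/
lemma dense_coset (hH : ∀ x : H, x + x = 0) (he : IsPairing e) {T : Finset H} (hT : Indep T)
    (S : Finset H) (hS : ∀ γ ∈ S, ∃ T' ⊆ T, ∑ i ∈ T', i = γ) (A : Finset H) (hA : A.Nonempty)
    (ρ : ℝ) (hρ : ρ * ((A.card : ℝ) / (Fintype.card H : ℝ)) ≤ ∑ γ ∈ S, hat e (ind A) γ ^ 2) :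
    ∃ t, ρ * (Fintype.card (annih he T) : ℝ) ≤ (slice (annih he T) t A).card := by
  have hN := card_pos_real (H := H)
  have hV := card_annih he hT
  set N : ℝ := (Fintype.card H : ℝ) with hNdef
  set V := annih he T with hVdef
  have h1 : ∑ γ ∈ S, hat e (ind A) γ ^ 2
      ≤ ∑ T' ∈ T.powerset, hat e (ind A) (∑ i ∈ T', i) ^ 2 := by
    have hsub : S ⊆ T.powerset.image (fun T' => ∑ i ∈ T', i) := by
      intro γ hγ
      obtain ⟨T', hT', rfl⟩ := hS γ hγ
      exact Finset.mem_image_of_mem _ (Finset.mem_powerset.mpr hT')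
    refine (Finset.sum_le_sum_of_subset_of_nonneg hsub fun _ _ _ => sq_nonneg _).trans ?_
    exact Finset.sum_image_le_of_nonneg (fun _ _ => sq_nonneg _)
  have h2 : ∑ T' ∈ T.powerset, hat e (ind A) (∑ i ∈ T', i) ^ 2
      = 2 ^ T.card / N ^ 2 * ∑ a ∈ A, ((slice V a A).card : ℝ) := by
    have h3 : ∀ γ, hat e (ind A) γ ^ 2 = (∑ a ∈ A, ∑ a' ∈ A, e γ (a + a')) / N ^ 2 := by
      intro γ
      rw [hat, div_pow]
      congr 1
      have : ∑ x, ind A x * e γ x = ∑ x ∈ A, e γ x := by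
        simp [ind, Finset.sum_ite_mem]
      rw [this, sq, Finset.sum_mul_sum]
      simp only [he.add_right]
    simp only [h3, pairing_sum he]
    rw [← Finset.sum_div, Finset.sum_comm, Finset.mul_sum, Finset.sum_div]
    refine Finset.sum_congr rfl fun a _ => ?_
    rw [Finset.sum_comm]
    simp only [← Finset.prod_one_add, prod_annih he, ← hVdef]
    have h4 : ((slice V a A).card : ℝ) = ∑ a' ∈ A, if a + a' ∈ V then (1 : ℝ) else 0 := by
      rw [slice_card, sum_subgroup V (fun x => ind A (x + a)),
        ← Equiv.sum_comp (Equiv.addLeft a)]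
      simp only [Equiv.coe_addLeft]
      have : ∀ x, ind A (a + x + a) = ind A x := by
        intro x
        rw [show a + x + a = x + (a + a) by abel, hH, add_zero]
      simp only [this]
      simp only [ind, ← ite_and]
      rw [← Finset.sum_filter, ← Finset.sum_filter]
      congr 1
      ext x
      simp [and_comm]
    rw [h4, ← Finset.sum_filter, ← Finset.sum_filter, Finset.sum_const, Finset.sum_const]
    simp
    ring
  by_contra! hcon
  have h5 : ∑ a ∈ A, ((slice V a A).card : ℝ) < ∑ a ∈ A, ρ * (Fintype.card V : ℝ) :=
    Finset.sum_lt_sum_of_nonempty hA fun a _ => hcon a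
  rw [Finset.sum_const, nsmul_eq_mul] at h5
  have h6 := hρ.trans (h1.trans h2.le)
  have h7 : 2 ^ T.card / N ^ 2 * ∑ a ∈ A, ((slice V a A).card : ℝ)
      < 2 ^ T.card / N ^ 2 * (A.card * (ρ * (Fintype.card V : ℝ))) := by
    gcongr
  have h8 : 2 ^ T.card / N ^ 2 * (A.card * (ρ * (Fintype.card V : ℝ)))
      = ρ * ((A.card : ℝ) / N) := by
    calc _ = (2 ^ T.card * (Fintype.card V : ℝ)) * (A.card * ρ) / N ^ 2 := by ring
      _ = _ := by rw [hV]; field_simp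
  linarith

lemma card_small_subsets (S : Finset H) (d : ℕ) :
    (S.powerset.filter fun T => T.card ≤ d).card ≤ (S.card + 1) ^ d := by
  have hsub : (S.powerset.filter fun T => T.card ≤ d)
      ⊆ (Finset.range (d + 1)).biUnion fun k => S.powersetCard k := by
    intro T hT
    simp only [Finset.mem_filter, Finset.mem_powerset] at hT
    simp only [Finset.mem_biUnion, Finset.mem_range, Finset.mem_powersetCard]
    exact ⟨T.card, by omega, hT.1, rfl⟩
  refine (Finset.card_le_card hsub).trans (Finset.card_biUnion_le.trans ?_)
  rw [add_pow]
  refine Finset.sum_le_sum fun k hk => ?_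
  rw [Finset.card_powersetCard, one_pow, mul_one]
  have h1 : 0 < d.choose k := Nat.choose_pos (by simpa [Nat.lt_succ_iff] using hk)
  exact (Nat.choose_le_pow _ _).trans (Nat.le_mul_of_pos_right _ h1)

lemma sum_slice_card (V : AddSubgroup H) (W : Finset H) :
    ∑ u, ((slice V u W).card : ℝ) = (W.card : ℝ) * (Fintype.card V : ℝ) := by
  simp only [slice_card]
  rw [Finset.sum_comm]
  have : ∀ v : V, ∑ u, ind W (v + u) = (W.card : ℝ) := by
    intro v
    rw [← sum_ind W]
    exact Equiv.sum_comp (Equiv.addLeft (v : H)) (ind W)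
  simp [this, mul_comm]

/-- Over each `a + a' + h ∈ W` there are at least `τ |H|` choices of the fourth variable `y`. -/
lemma cnt_le_lambda (hH : ∀ x : H, x + x = 0) (A : H → Finset H) (W : Finset H) (τ : ℝ)
    (hτ : 0 ≤ τ)
    (hW : ∀ h ∈ W, τ ≤ ((A h).card : ℝ) / (Fintype.card H : ℝ)) :
    τ * (cnt W A / (Fintype.card H : ℝ) ^ 3) ≤ famLambda A := by
  have hN := card_pos_real (H := H)
  rw [lambda_eq_form hH, cnt_eq_form, ← mul_div_assoc]
  gcongr
  unfold form
  rw [Finset.mul_sum]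
  refine Finset.sum_le_sum fun h _ => ?_
  rw [← mul_assoc, Finset.mul_sum, Finset.mul_sum]
  refine Finset.sum_le_sum fun a _ => ?_
  rw [Finset.mul_sum, Finset.mul_sum]
  refine Finset.sum_le_sum fun a' _ => ?_
  have h1 : ind W h ≤ 1 := by unfold ind; split_ifs <;> norm_num
  have h2 : τ * ind W (a + a' + h) ≤ ((A (a + a' + h)).card : ℝ) / (Fintype.card H : ℝ) := by
    by_cases hh : a + a' + h ∈ W
    · simpa [ind, hh] using hW _ hh
    · simp [ind, hh]; positivity
  have h3 := mul_nonneg (ind_nonneg (A h) a) (ind_nonneg (A h) a')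
  have h4 := mul_nonneg hτ (ind_nonneg W (a + a' + h))
  calc τ * ind W h * (ind (A h) a * ind (A h) a' * ind W (a + a' + h))
      = ind W h * ((ind (A h) a * ind (A h) a') * (τ * ind W (a + a' + h))) := by ring
    _ ≤ 1 * ((ind (A h) a * ind (A h) a') * (τ * ind W (a + a' + h))) := by
        gcongr
    _ ≤ _ := by gcongr

/-- The structured case. Suppose that over each `h ∈ W` a set `Sh h ⊆ S` of frequencies of rank at
most `d` carries a proportion `ρ` of the `L²` mass of `A h`. By pigeonhole over the at most
`(|S| + 1) ^ d` bases, many of these `h` share the same annihilator `V`, on a coset of which `A h` is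
`ρ`-dense, and `cnt_lower` applies in `V`. -/
lemma structured_lower (hH : ∀ x : H, x + x = 0) (he : IsPairing e) (A : H → Finset H)
    (W S : Finset H) (Sh : H → Finset H) (d κ : ℕ) (ρ τ ω : ℝ) (hρ : 0 < ρ) (hτ : 0 < τ)
    (hω : 0 ≤ ω) (hκ2 : 2 ≤ κ) (hκ : 14 ≤ κ * ρ)
    (hWω : ω * (Fintype.card H : ℝ) ≤ W.card)
    (hSh : ∀ h ∈ W, Sh h ⊆ S)
    (hd : ∀ h ∈ W, ∀ T ⊆ Sh h, Indep T → T.card ≤ d)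
    (hmass : ∀ h ∈ W, ρ * (((A h).card : ℝ) / (Fintype.card H : ℝ))
      ≤ ∑ γ ∈ Sh h, hat e (ind (A h)) γ ^ 2)
    (hA : ∀ h ∈ W, τ ≤ ((A h).card : ℝ) / (Fintype.card H : ℝ)) :
    τ * (ρ ^ 2 / 2) * (ω / ((S.card : ℝ) + 1) ^ d) ^ κ * (1 / 8) ^ d ≤ famLambda A := by
  have hN := card_pos_real (H := H)
  set N : ℝ := (Fintype.card H : ℝ) with hNdef
  choose T hTS hT hspan using fun h => exists_indep_spanning hH (Sh h)
  have hmaps : ∀ h ∈ W, T h ∈ S.powerset.filter fun T => T.card ≤ d := by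
    intro h hh
    rw [Finset.mem_filter, Finset.mem_powerset]
    exact ⟨(hTS h).trans (hSh h hh), hd h hh _ (hTS h) (hT h)⟩
  -- pigeonhole: the most popular basis `T₀`
  obtain ⟨T₀, hT₀, hpop⟩ : ∃ T₀ ∈ S.powerset.filter (fun T => T.card ≤ d),
      (W.card : ℝ) ≤ ((S.card : ℝ) + 1) ^ d * (W.filter fun h => T h = T₀).card := by
    by_contra! hcon
    have h1 := Finset.card_eq_sum_card_fiberwise hmaps
    have hne : (S.powerset.filter fun T => T.card ≤ d).Nonempty := ⟨∅, by simp⟩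
    have h2 : ∑ b ∈ S.powerset.filter (fun T => T.card ≤ d),
        ((S.card : ℝ) + 1) ^ d * ((W.filter fun h => T h = b).card : ℝ)
        < ∑ b ∈ S.powerset.filter (fun T => T.card ≤ d), (W.card : ℝ) :=
      Finset.sum_lt_sum_of_nonempty hne hcon
    rw [← Finset.mul_sum, ← Nat.cast_sum, ← h1, Finset.sum_const, nsmul_eq_mul] at h2
    have h3 : ((S.powerset.filter fun T => T.card ≤ d).card : ℝ) ≤ ((S.card : ℝ) + 1) ^ d := by
      exact_mod_cast card_small_subsets S d
    have h4 := mul_le_mul_of_nonneg_right h3 (Nat.cast_nonneg (α := ℝ) W.card)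
    linarith
  rw [Finset.mem_filter] at hT₀
  set W₁ := W.filter fun h => T h = T₀ with hW₁
  have hpos : (0 : ℝ) < ((S.card : ℝ) + 1) ^ d := by positivity
  rcases Finset.eq_empty_or_nonempty W₁ with hemp | ⟨h₀, hh₀⟩
  · -- then `W` is empty and the asserted lower bound is zero
    rw [hemp] at hpop
    simp only [Finset.card_empty, Nat.cast_zero, mul_zero] at hpop
    have hω0 : ω = 0 := by
      refine le_antisymm ?_ hω
      by_contra! h
      have := mul_pos h hN
      linarith
    rw [hω0, zero_div, zero_pow (by omega)]
    simp only [mul_zero, zero_mul]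
    unfold famLambda
    positivity
  have hTi : Indep T₀ := by
    have := (Finset.mem_filter.mp hh₀).2
    exact this ▸ hT h₀
  have hVc := card_annih he hTi
  have hW₁sub : ∀ h ∈ W₁, h ∈ W := fun h hh => (Finset.mem_filter.mp hh).1
  have hcos : ∀ h, ∃ t, h ∈ W₁ → ρ * (Fintype.card (annih he T₀) : ℝ)
      ≤ (slice (annih he T₀) t (A h)).card := by
    intro h
    by_cases hh : h ∈ W₁
    · have hne : (A h).Nonempty := by
        rw [Finset.nonempty_iff_ne_empty]
        intro h0
        have := hA h (hW₁sub h hh)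
        rw [h0] at this
        simp at this
        linarith
      have hsp := hspan h
      rw [(Finset.mem_filter.mp hh).2] at hsp
      obtain ⟨t, ht⟩ := dense_coset hH he hTi (Sh h) hsp (A h) hne ρ (hmass h (hW₁sub h hh))
      exact ⟨t, fun _ => ht⟩
    · exact ⟨0, fun h' => absurd h' hh⟩
  choose t ht using hcos
  set V := annih he T₀ with hVdef
  have hVpos := card_pos_real (H := V)
  obtain ⟨u, hu⟩ : ∃ u, (W₁.card : ℝ) * (Fintype.card V : ℝ) ≤ N * (slice V u W₁).card := by
    by_contra! hcon
    have h2 := Finset.sum_lt_sum_of_nonempty (s := (Finset.univ : Finset H))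
      Finset.univ_nonempty (fun u _ => hcon u)
    rw [← Finset.mul_sum, sum_slice_card, Finset.sum_const, nsmul_eq_mul, Finset.card_univ] at h2
    exact lt_irrefl _ h2
  have hcnt := cnt_lower ρ hρ κ hκ2 hκ (Fintype.card V) V le_rfl (fun x => Subtype.ext (hH x))
    (slice V u W₁) (fun v : V => slice V (t (v + u)) (A (v + u)))
    (ω / ((S.card : ℝ) + 1) ^ d) (by positivity)
    (by
      have h1 : ω / ((S.card : ℝ) + 1) ^ d * N ≤ W₁.card := by
        rw [div_mul_eq_mul_div, div_le_iff₀ hpos]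
        linarith
      have h2 := mul_le_mul_of_nonneg_right h1 hVpos.le
      refine le_of_mul_le_mul_left ?_ hN
      linarith)
    (by
      intro v hv
      rw [mem_slice] at hv
      exact ht _ hv)
  have hcntslice : (cnt (slice V u W₁) (fun v : V => slice V (t (v + u)) (A (v + u))) : ℝ)
      ≤ cnt W₁ A := by exact_mod_cast cnt_slice hH V W₁ A u t
  have hlam := cnt_le_lambda hH A W₁ τ hτ.le (fun h hh => hA h (hW₁sub h hh))
  refine le_trans ?_ hlam
  rw [← hNdef]
  have hratio : ((1 : ℝ) / 8) ^ d ≤ (Fintype.card V : ℝ) ^ 3 / N ^ 3 := by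
    rw [hNdef, ← hVc, mul_pow, ← pow_mul, mul_comm T₀.card, pow_mul, div_mul_cancel_right₀ (by positivity)]
    norm_num only
    rw [one_div, inv_pow]
    gcongr
    · norm_num
    · exact hT₀.2
  calc τ * (ρ ^ 2 / 2) * (ω / ((S.card : ℝ) + 1) ^ d) ^ κ * (1 / 8) ^ d
      ≤ τ * (ρ ^ 2 / 2) * (ω / ((S.card : ℝ) + 1) ^ d) ^ κ
        * ((Fintype.card V : ℝ) ^ 3 / N ^ 3) := by gcongr
    _ = τ * ((ρ ^ 2 / 2 * (ω / ((S.card : ℝ) + 1) ^ d) ^ κ * (Fintype.card V : ℝ) ^ 3)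
        / N ^ 3) := by ring
    _ ≤ _ := by
        gcongr
        exact hcnt.trans hcntslice

end Chang

/-! ### The large spectrum -/

section Spectrum

variable {H : Type} [AddCommGroup H] [Fintype H] {e : H → H → ℝ}

/-- If no nonzero frequency gives the density increment and `Λ(𝒜)` is below half of its expected
value `K α³`, then the large spectrum `S` of the density function has `O(α⁻²)` elements and carries,
for many `h`, a proportion `1 / (4L)` of the `L²` mass of `A h` at frequencies where `A h` itself has a
large coefficient. Chang's theorem bounds the rank of these frequencies, and `structured_lower`
applies. -/
lemma spectral_lower (hH : ∀ x : H, x + x = 0) (he : IsPairing e) (A : H → Finset H)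
    (α K L : ℝ) (hα : 0 < α) (hK : 1 ≤ K) (hL : 2 ≤ L)
    (hdens : (∑ h, ((A h).card : ℝ) / (Fintype.card H : ℝ)) / (Fintype.card H : ℝ) = α)
    (hsq : (∑ h, (((A h).card : ℝ) / (Fintype.card H : ℝ)) ^ 2) / (Fintype.card H : ℝ)
      = K * α ^ 2)
    (hf : ∀ γ, γ ≠ 0 → |hat e (fun h => ((A h).card : ℝ) / (Fintype.card H : ℝ)) γ|
      ≤ L * α ^ 2 / (4 * K))
    (hF : ∀ γ, γ ≠ 0 → (∑ h, |hat e (ind (A h)) γ|) / (Fintype.card H : ℝ)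
      ≤ L * α ^ 2 / (4 * K))
    (hΛ : famLambda A < K * α ^ 3 / 2) (d κ : ℕ)
    (hd : ∀ t : ℕ, (t : ℝ) ≤ 8192 * L ^ 6 * Real.log (16 * L ^ 2 / α) → t ≤ d) (hκ : 56 * L ≤ κ) :
    ∃ s : ℕ, s * α ^ 2 ≤ 16 ∧
      α / (16 * L ^ 2) * ((1 / (4 * L)) ^ 2 / 2) * (α / (4 * L) / ((s : ℝ) + 1) ^ d) ^ κ
        * (1 / 8) ^ d ≤ famLambda A := by
  have hN := card_pos_real (H := H)
  have hL0 : 0 < L := by linarith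
  have hK0 : 0 < K := by linarith
  have hform := form_lower hH he (fun _ => 1)
    (fun h => ((A h).card : ℝ) / (Fintype.card H : ℝ)) (fun _ => zero_le_one) A
  rw [← lambda_eq_form hH, hat_zero he, hdens] at hform
  simp only [one_mul] at hform
  rw [hsq] at hform
  have hpars := parseval hH he (fun h => ((A h).card : ℝ) / (Fintype.card H : ℝ))
  rw [hsq] at hpars
  have hparsA := fun h => parseval_ind hH he (A h)
  have hcard1 : ∀ h, ((A h).card : ℝ) / (Fintype.card H : ℝ) ≤ 1 := by
    intro h
    rw [div_le_one hN]
    exact_mod_cast Finset.card_le_univ (A h)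
  have hf0 : ∀ h, 0 ≤ ((A h).card : ℝ) / (Fintype.card H : ℝ) := fun h => by positivity
  have habs := fun h => abs_hat_ind_le he (A h)
  have hApos : ∀ h, 0 < ((A h).card : ℝ) / (Fintype.card H : ℝ) → (A h).Nonempty := by
    intro h hh
    rw [Finset.nonempty_iff_ne_empty]
    intro h0
    rw [h0] at hh
    simp at hh
  have hchang : ∀ h T, Indep T → 0 < ((A h).card : ℝ) / (Fintype.card H : ℝ) →
      (∀ γ ∈ T, 1 / (64 * L ^ 3) * (((A h).card : ℝ) / (Fintype.card H : ℝ))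
        ≤ |hat e (ind (A h)) γ|) →
      T.card * (1 / (64 * L ^ 3)) ^ 2 / 2
        ≤ Real.log ((((A h).card : ℝ) / (Fintype.card H : ℝ))⁻¹) := by
    intro h T hT hh hγ
    rw [inv_div]
    exact chang he hT (A h) (hApos h hh) _ (by positivity) hγ
  clear hApos
  set N : ℝ := (Fintype.card H : ℝ) with hNdef
  set f : H → ℝ := fun h => ((A h).card : ℝ) / N with hfdef
  have hfh : ∀ h, ((A h).card : ℝ) / N = f h := fun h => rfl
  simp only [hfh] at *
  set F : H → H → ℝ := fun h γ => hat e (ind (A h)) γ with hFdef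
  have hFh : ∀ h γ, hat e (ind (A h)) γ = F h γ := fun h γ => rfl
  simp only [hFh] at *
  clear hfh hFh hfdef hFdef
  have hsumf : ∑ h, f h = N * α := by rw [← hdens]; field_simp
  have hsumsq : ∑ h, f h ^ 2 = N * (K * α ^ 2) := by rw [← hsq]; field_simp
  set S : Finset H := (Finset.univ.erase 0).filter fun γ => K * α ^ 2 / 4 ≤ |hat e f γ| with hS
  have hS0 : ∀ γ ∈ S, γ ≠ 0 := fun γ hγ => Finset.ne_of_mem_erase (Finset.mem_filter.mp hγ).1
  have hSbig : ∀ γ ∈ S, K * α ^ 2 / 4 ≤ |hat e f γ| := fun γ hγ => (Finset.mem_filter.mp hγ).2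
  let P : H → ℝ := fun γ => (∑ h, F h γ ^ 2) / N
  have hP0 : ∀ γ, 0 ≤ P γ := fun γ => div_nonneg (Finset.sum_nonneg fun _ _ => sq_nonneg _) hN.le
  have hPtot : ∑ γ, P γ = α := by
    simp only [P]
    rw [← Finset.sum_div, Finset.sum_comm]
    simp only [hparsA]
    exact hdens
  -- the large spectrum carries much of the mass of the fibres
  have hX : K ^ 2 * α / L ≤ ∑ γ ∈ S, P γ := by
    have h1 : K * α ^ 3 / 2 ≤ ∑ γ ∈ Finset.univ.erase 0, |hat e f γ| * P γ := by
      have : α * (K * α ^ 2) = K * α ^ 3 := by ring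
      simp only [P]
      linarith
    rw [← Finset.sum_filter_add_sum_filter_not (Finset.univ.erase 0)
      (fun γ => K * α ^ 2 / 4 ≤ |hat e f γ|), ← hS] at h1
    have h2 : ∑ γ ∈ (Finset.univ.erase 0).filter (fun γ => ¬ K * α ^ 2 / 4 ≤ |hat e f γ|),
        |hat e f γ| * P γ ≤ K * α ^ 2 / 4 * α := by
      have htot : K * α ^ 2 / 4 * α = ∑ γ, K * α ^ 2 / 4 * P γ := by
        rw [← Finset.mul_sum, hPtot]
      rw [htot]
      refine (Finset.sum_le_sum (g := fun γ => K * α ^ 2 / 4 * P γ) fun γ hγ => ?_).trans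
        (Finset.sum_le_sum_of_subset_of_nonneg (Finset.subset_univ _) fun γ _ _ => ?_)
      · exact mul_le_mul_of_nonneg_right (not_le.mp (Finset.mem_filter.mp hγ).2).le (hP0 γ)
      · exact mul_nonneg (by positivity) (hP0 γ)
    have h3 : ∑ γ ∈ S, |hat e f γ| * P γ ≤ L * α ^ 2 / (4 * K) * ∑ γ ∈ S, P γ := by
      rw [Finset.mul_sum]
      exact Finset.sum_le_sum fun γ hγ =>
        mul_le_mul_of_nonneg_right (hf γ (hS0 γ hγ)) (hP0 γ)
    have h4 : K * α ^ 3 / 4 ≤ L * α ^ 2 / (4 * K) * ∑ γ ∈ S, P γ := by linarith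
    have h5 : L * α ^ 2 / (4 * K) * (K ^ 2 * α / L) = K * α ^ 3 / 4 := by field_simp
    rw [← h5] at h4
    exact le_of_mul_le_mul_left h4 (by positivity)
  have hScard : S.card * (K * α ^ 2) ≤ 16 := by
    have h1 : ∑ γ ∈ S, (K * α ^ 2 / 4) ^ 2 ≤ K * α ^ 2 := by
      refine le_trans ?_ hpars.le
      refine (Finset.sum_le_sum (g := fun γ => hat e f γ ^ 2) fun γ hγ => ?_).trans
        (Finset.sum_le_sum_of_subset_of_nonneg (Finset.subset_univ _) fun γ _ _ => sq_nonneg _)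
      rw [← sq_abs (hat e f γ)]
      have := hSbig γ hγ
      gcongr
    rw [Finset.sum_const, nsmul_eq_mul] at h1
    have h2 : 0 < K * α ^ 2 := by positivity
    refine le_of_mul_le_mul_right ?_ h2
    linarith
  -- frequencies in the large spectrum at which the fibre over `h` has a large coefficient
  let Sh : H → Finset H := fun h => S.filter fun γ => α / (16 * L ^ 2) ≤ |F h γ|
  let m : H → ℝ := fun h => ∑ γ ∈ Sh h, F h γ ^ 2
  have hmf : ∀ h, m h ≤ f h := by
    intro h
    rw [← hparsA h]
    exact Finset.sum_le_sum_of_subset_of_nonneg (Finset.subset_univ _) fun _ _ _ => sq_nonneg _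
  have hsumm : N * (K * α / L - α / (4 * L)) ≤ ∑ h, m h := by
    have h1 : ∀ h, ∑ γ ∈ S, F h γ ^ 2 ≤ m h + α / (16 * L ^ 2) * ∑ γ ∈ S, |F h γ| := by
      intro h
      rw [← Finset.sum_filter_add_sum_filter_not S (fun γ => α / (16 * L ^ 2) ≤ |F h γ|)]
      refine add_le_add le_rfl ?_
      rw [Finset.mul_sum]
      refine (Finset.sum_le_sum (g := fun γ => α / (16 * L ^ 2) * |F h γ|) fun γ hγ => ?_).trans
        (Finset.sum_le_sum_of_subset_of_nonneg (Finset.filter_subset _ _) fun γ _ _ => ?_)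
      · rw [← sq_abs, sq]
        exact mul_le_mul_of_nonneg_right (not_le.mp (Finset.mem_filter.mp hγ).2).le (abs_nonneg _)
      · positivity
    have h2 := Finset.sum_le_sum (s := (Finset.univ : Finset H)) fun h _ => h1 h
    rw [Finset.sum_add_distrib, ← Finset.mul_sum, Finset.sum_comm,
      Finset.sum_comm (f := fun h γ => |F h γ|)] at h2
    have h3 : ∑ γ ∈ S, ∑ h, F h γ ^ 2 = N * ∑ γ ∈ S, P γ := by
      rw [Finset.mul_sum]
      refine Finset.sum_congr rfl fun γ _ => ?_
      simp only [P]
      field_simp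
    have h4 : ∑ γ ∈ S, ∑ h, |F h γ| ≤ S.card * (N * (L * α ^ 2 / (4 * K))) := by
      rw [← nsmul_eq_mul, ← Finset.sum_const]
      refine Finset.sum_le_sum fun γ hγ => ?_
      have := (div_le_iff₀ hN).mp (hF γ (hS0 γ hγ))
      linarith
    have h5 : α / (16 * L ^ 2) * ∑ γ ∈ S, ∑ h, |F h γ| ≤ N * (α / (4 * L)) := by
      calc α / (16 * L ^ 2) * ∑ γ ∈ S, ∑ h, |F h γ|
          ≤ α / (16 * L ^ 2) * (S.card * (N * (L * α ^ 2 / (4 * K)))) := by gcongr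
        _ = N * (α / (64 * L * K ^ 2)) * (S.card * (K * α ^ 2)) := by
            generalize (S.card : ℝ) = c
            field_simp
            ring
        _ ≤ N * (α / (64 * L * K ^ 2)) * 16 := by gcongr
        _ = N * (α / (4 * L)) * (1 / K ^ 2) := by field_simp; ring
        _ ≤ N * (α / (4 * L)) * 1 := by
            gcongr
            rw [div_le_one (by positivity)]
            nlinarith
        _ = _ := by ring
    have h6 : K * α / L ≤ ∑ γ ∈ S, P γ := by
      refine le_trans ?_ hX
      gcongr
      nlinarith
    have h7 := mul_le_mul_of_nonneg_left h6 hN.le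
    rw [mul_sub]
    linarith
  set W : Finset H := Finset.univ.filter fun h =>
    f h ≤ 4 * L * α ∧ 1 / (4 * L) * f h ≤ m h ∧ (Sh h).Nonempty with hW
  have hWcard : α / (4 * L) * N ≤ W.card := by
    have h1 : ∀ h, m h ≤ ind W h + f h ^ 2 / (4 * L * α) + 1 / (4 * L) * f h := by
      intro h
      have i0 := ind_nonneg W h
      have i1 : 0 ≤ f h ^ 2 / (4 * L * α) := div_nonneg (sq_nonneg _) (by positivity)
      have i2 : 0 ≤ 1 / (4 * L) * f h := mul_nonneg (by positivity) (hf0 h)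
      by_cases hh : h ∈ W
      · have : ind W h = 1 := by simp [ind, hh]
        have := hmf h
        have := hcard1 h
        linarith
      · rw [hW, Finset.mem_filter] at hh
        simp only [Finset.mem_univ, true_and, not_and_or] at hh
        rcases hh with hh | hh | hh
        · have : f h ≤ f h ^ 2 / (4 * L * α) := by
            rw [le_div_iff₀ (by positivity), sq]
            exact mul_le_mul_of_nonneg_left (not_le.mp hh).le (hf0 h)
          have := hmf h
          linarith
        · linarith
        · rw [Finset.not_nonempty_iff_eq_empty] at hh
          have : m h = 0 := by simp [m, hh]
          linarith
    have h2 := Finset.sum_le_sum (s := (Finset.univ : Finset H)) fun h _ => h1 h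
    rw [Finset.sum_add_distrib, Finset.sum_add_distrib, sum_ind, ← Finset.sum_div,
      ← Finset.mul_sum, hsumf, hsumsq] at h2
    have h3 : N * (K * α ^ 2) / (4 * L * α) = N * (K * α / (4 * L)) := by field_simp
    rw [h3] at h2
    have h4 : N * (K * α / L - α / (4 * L)) - N * (K * α / (4 * L)) - 1 / (4 * L) * (N * α)
        - α / (4 * L) * N = N * (α / (4 * L)) * (3 * (K - 1)) := by field_simp; ring
    have h5 : 0 ≤ N * (α / (4 * L)) * (3 * (K - 1)) :=
      mul_nonneg (by positivity) (by linarith)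
    linarith
  have hWf : ∀ h ∈ W, α / (16 * L ^ 2) ≤ f h := by
    intro h hh
    obtain ⟨γ, hγ⟩ := (Finset.mem_filter.mp hh).2.2.2
    exact ((Finset.mem_filter.mp hγ).2).trans (habs h γ)
  refine ⟨S.card, ?_, ?_⟩
  · refine le_trans ?_ hScard
    refine mul_le_mul_of_nonneg_left ?_ (Nat.cast_nonneg _)
    nlinarith [sq_nonneg α]
  · refine structured_lower hH he A W S Sh d κ (1 / (4 * L)) (α / (16 * L ^ 2)) (α / (4 * L))
      (by positivity) (by positivity) (by positivity) ?_ ?_ hWcard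
      (fun h _ => Finset.filter_subset _ _) ?_ (fun h hh => (Finset.mem_filter.mp hh).2.2.1) hWf
    · have : (2 : ℝ) ≤ κ := by linarith
      exact_mod_cast this
    · rw [mul_one_div, le_div_iff₀ (by positivity)]
      linarith
    · intro h hh T hTS hT
      have hlow := hWf h hh
      have hpos : 0 < f h := lt_of_lt_of_le (by positivity) hlow
      have h1 := hchang h T hT hpos (by
        intro γ hγ
        refine le_trans ?_ (Finset.mem_filter.mp (hTS hγ)).2
        calc 1 / (64 * L ^ 3) * f h ≤ 1 / (64 * L ^ 3) * (4 * L * α) := by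
              gcongr
              exact (Finset.mem_filter.mp hh).2.1
          _ = α / (16 * L ^ 2) := by field_simp; ring)
      have h2 : Real.log (f h)⁻¹ ≤ Real.log (16 * L ^ 2 / α) := by
        apply Real.log_le_log (inv_pos.mpr hpos)
        rw [← inv_div]
        exact inv_anti₀ (by positivity) hlow
      have h3 : (T.card : ℝ) = 8192 * L ^ 6 * (T.card * (1 / (64 * L ^ 3)) ^ 2 / 2) := by
        generalize (T.card : ℝ) = c
        field_simp
        ring
      refine hd _ ?_
      rw [h3]
      have := h1.trans h2
      gcongr

end Spectrum

/-! ### Numerical estimates -/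

section Numerics

/-- Polynomial factors in `L` are absorbed by `exp (35 L³ (log L)²)`: for `L ≥ 2` one has
`60000000 L⁹ ≤ L²⁶ L⁹ = exp (35 log L)` and `1 ≤ L³ log L`. -/
lemma exp_bound {L ℓ E : ℝ} (hL : 2 ≤ L) (hE : E ≤ 60000000 * L ^ 9 * (1 + ℓ ^ 2)) :
    Real.exp (-((1 + ℓ ^ 2) * Real.exp (35 * L ^ 3 * Real.log L ^ 2))) ≤ Real.exp (-E) := by
  have hL0 : 0 < L := by linarith
  rw [Real.exp_le_exp, neg_le_neg_iff]
  refine hE.trans ?_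
  rw [mul_comm]
  gcongr
  have hlog : (1 / 2 : ℝ) ≤ Real.log L := by
    have := Real.log_two_gt_d9
    have := Real.log_le_log (by norm_num) hL
    linarith
  have hL3 : 8 ≤ L ^ 3 := by
    calc (8 : ℝ) = 2 ^ 3 := by norm_num
      _ ≤ L ^ 3 := by gcongr
  calc 60000000 * L ^ 9 ≤ L ^ 26 * L ^ 9 := by
        gcongr
        calc (60000000 : ℝ) ≤ 2 ^ 26 := by norm_num
          _ ≤ L ^ 26 := by gcongr
    _ = Real.exp (35 * Real.log L) := by
        rw [← pow_add, show (35 : ℝ) = ((35 : ℕ) : ℝ) by norm_num, Real.exp_nat_mul,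
          Real.exp_log hL0]
    _ ≤ _ := by
        rw [Real.exp_le_exp]
        have h1 : 1 ≤ L ^ 3 * Real.log L := by nlinarith
        nlinarith

/-- The exponent produced by `numerics`, with `ℓ = log α⁻¹`, is quadratic in `ℓ` and polynomial
in `L`; the quadratic growth comes from the product of the rank `d` and `log (|S| + 1)`. -/
lemma exponent_bound {L ℓ d κ : ℝ} (hL : 2 ≤ L) (hℓ0 : 0 ≤ ℓ) (hd0 : 0 ≤ d)
    (hd : d ≤ 8192 * L ^ 6 * (16 * L ^ 2 + ℓ)) (hκ : κ ≤ 57 * L) :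
    (ℓ + 16 * L ^ 2) + 32 * L ^ 2 + κ * (ℓ + 4 * L + d * (3 + 2 * ℓ)) + d * 3
      ≤ 60000000 * L ^ 9 * (1 + ℓ ^ 2) := by
  have hL0 : 0 < L := by linarith
  have hL1 : 1 ≤ L := by linarith
  obtain ⟨y, hy⟩ : ∃ y, y = 1 + ℓ := ⟨_, rfl⟩
  have hy1 : 1 ≤ y := by linarith
  have hyy : y ≤ y ^ 2 := by nlinarith
  have hpow : ∀ k, k ≤ 9 → L ^ k ≤ L ^ 9 := fun k hk => pow_le_pow_right₀ hL1 hk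
  have hLy : 16 * L ^ 2 + ℓ ≤ 16 * L ^ 2 * y := by
    have h1 : 1 ≤ 16 * L ^ 2 := by nlinarith
    rw [hy]
    nlinarith [mul_le_mul_of_nonneg_right h1 hℓ0]
  have hdy : d ≤ 131072 * L ^ 8 * y := by
    refine hd.trans ((mul_le_mul_of_nonneg_left hLy (by positivity)).trans (le_of_eq ?_))
    ring
  clear hd
  have c1 : y ≤ L ^ 9 * y ^ 2 := by
    have := hpow 0 (by norm_num)
    nlinarith
  have c2 : L ^ 2 ≤ L ^ 9 * y ^ 2 := by
    have := hpow 2 (by norm_num)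
    have : 0 < L ^ 9 := by positivity
    nlinarith
  have c3 : d ≤ 131072 * (L ^ 9 * y ^ 2) := by
    refine hdy.trans ?_
    have := hpow 8 (by norm_num)
    calc 131072 * L ^ 8 * y ≤ 131072 * L ^ 9 * y ^ 2 := by gcongr
      _ = _ := by ring
  have k1 : ℓ + 4 * L ≤ 4 * L ^ 8 * y ^ 2 := by
    have e1 : ℓ + 4 * L ≤ 4 * L * y := by rw [hy]; nlinarith
    have e2 : L ≤ L ^ 8 := le_self_pow₀ hL1 (by norm_num)
    calc ℓ + 4 * L ≤ 4 * L * y := e1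
      _ ≤ 4 * L ^ 8 * y ^ 2 := by gcongr
  have k2 : d * (3 + 2 * ℓ) ≤ 131072 * L ^ 8 * y * (3 * y) :=
    mul_le_mul hdy (by linarith) (by linarith) (by positivity)
  have c4 : κ * (ℓ + 4 * L + d * (3 + 2 * ℓ)) ≤ 22413540 * (L ^ 9 * y ^ 2) := by
    refine (mul_le_mul hκ (add_le_add k1 k2) (by positivity) (by positivity)).trans (le_of_eq ?_)
    ring
  have hy2 : y ^ 2 ≤ 2 * (1 + ℓ ^ 2) := by rw [hy]; nlinarith [sq_nonneg (1 - ℓ)]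
  have hZ : L ^ 9 * y ^ 2 ≤ L ^ 9 * (2 * (1 + ℓ ^ 2)) :=
    mul_le_mul_of_nonneg_left hy2 (by positivity)
  have hZ0 : 0 ≤ L ^ 9 * y ^ 2 := by positivity
  linarith

/-- The bound of `spectral_lower` is of the shape required by the theorem. -/
lemma numerics {α L : ℝ} (hα : 0 < α) (hα1 : α ≤ 1) (hL : 2 ≤ L) (d κ s : ℕ)
    (hd : (d : ℝ) ≤ 8192 * L ^ 6 * Real.log (16 * L ^ 2 / α)) (hκ : (κ : ℝ) ≤ 57 * L)
    (hs : s * α ^ 2 ≤ 16) :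
    Real.exp (-((1 + Real.log α⁻¹ ^ 2) * Real.exp (35 * L ^ 3 * Real.log L ^ 2)))
      ≤ α / (16 * L ^ 2) * ((1 / (4 * L)) ^ 2 / 2) * (α / (4 * L) / ((s : ℝ) + 1) ^ d) ^ κ
        * (1 / 8) ^ d := by
  have hL0 : 0 < L := by linarith
  set ℓ := Real.log α⁻¹ with hℓ
  have hℓ0 : 0 ≤ ℓ := Real.log_nonneg ((one_le_inv₀ hα).mpr hα1)
  have hαe : α = Real.exp (-ℓ) := by
    rw [hℓ, Real.log_inv, neg_neg, Real.exp_log hα]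
  -- each factor is replaced by a crude exponential lower bound, using `x ≤ exp x`
  have hcr : ∀ x : ℝ, x ≤ Real.exp x := fun x => by linarith [Real.add_one_le_exp x]
  have b1 : Real.exp (-(ℓ + 16 * L ^ 2)) ≤ α / (16 * L ^ 2) := by
    rw [neg_add, Real.exp_add, ← hαe, Real.exp_neg (16 * L ^ 2), ← div_eq_mul_inv]
    gcongr
    exact hcr _
  have b2 : Real.exp (-(32 * L ^ 2)) ≤ (1 / (4 * L)) ^ 2 / 2 := by
    rw [show (1 / (4 * L)) ^ 2 / 2 = (32 * L ^ 2)⁻¹ by field_simp; ring, Real.exp_neg]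
    gcongr
    exact hcr _
  have b3 : ((s : ℝ) + 1) ≤ Real.exp (3 + 2 * ℓ) := by
    have h1 : ((s : ℝ) + 1) ≤ 17 / α ^ 2 := by
      rw [le_div_iff₀ (by positivity)]
      nlinarith
    have h2 : Real.exp (2 * ℓ) = 1 / α ^ 2 := by
      rw [hαe, ← Real.exp_nat_mul, one_div, ← Real.exp_neg]
      congr 1
      push_cast
      ring
    have h3 : (17 : ℝ) ≤ Real.exp 3 := by
      have h := Real.exp_one_gt_d9
      have : Real.exp 3 = Real.exp 1 ^ 3 := by rw [← Real.exp_nat_mul]; norm_num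
      rw [this]
      calc (17 : ℝ) ≤ 2.7 ^ 3 := by norm_num
        _ ≤ _ := by gcongr; linarith
    rw [Real.exp_add, h2]
    refine h1.trans ?_
    rw [mul_one_div]
    gcongr
  have b4 : Real.exp (-(ℓ + 4 * L + d * (3 + 2 * ℓ))) ≤ α / (4 * L) / ((s : ℝ) + 1) ^ d := by
    rw [neg_add, neg_add, Real.exp_add, Real.exp_add, ← hαe, Real.exp_neg (4 * L),
      Real.exp_neg (d * (3 + 2 * ℓ)), ← div_eq_mul_inv, ← div_eq_mul_inv, Real.exp_nat_mul]
    gcongr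
    exact hcr _
  have b5 : Real.exp (-(d * 3)) ≤ (1 / 8) ^ d := by
    rw [← mul_neg, Real.exp_nat_mul]
    gcongr
    rw [Real.exp_neg, one_div]
    gcongr
    have h := Real.exp_one_gt_d9
    have : Real.exp 3 = Real.exp 1 ^ 3 := by rw [← Real.exp_nat_mul]; norm_num
    rw [this]
    calc (8 : ℝ) = 2 ^ 3 := by norm_num
      _ ≤ _ := by gcongr; linarith
  set E : ℝ := (ℓ + 16 * L ^ 2) + 32 * L ^ 2 + κ * (ℓ + 4 * L + d * (3 + 2 * ℓ)) + d * 3 with hE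
  have hprod : Real.exp (-E) ≤ α / (16 * L ^ 2) * ((1 / (4 * L)) ^ 2 / 2)
      * (α / (4 * L) / ((s : ℝ) + 1) ^ d) ^ κ * (1 / 8) ^ d := by
    rw [hE, neg_add, neg_add, neg_add, Real.exp_add, Real.exp_add, Real.exp_add,
      ← mul_neg (κ : ℝ), Real.exp_nat_mul]
    gcongr
  refine le_trans (exp_bound hL ?_) hprod
  have hlog : Real.log (16 * L ^ 2 / α) ≤ 16 * L ^ 2 + ℓ := by
    rw [div_eq_mul_inv, Real.log_mul (by positivity) (by positivity)]
    have := Real.log_le_sub_one_of_pos (show 0 < 16 * L ^ 2 by positivity)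
    linarith
  exact exponent_bound hL hℓ0 (Nat.cast_nonneg _)
    (hd.trans (by gcongr)) hκ

/-- The main term `α³ / 2` also exceeds the bound required by the theorem. -/
lemma numerics_main_term {α L : ℝ} (hα : 0 < α) (hα1 : α ≤ 1) (hL : 2 ≤ L) :
    Real.exp (-((1 + Real.log α⁻¹ ^ 2) * Real.exp (35 * L ^ 3 * Real.log L ^ 2)))
      ≤ α ^ 3 / 2 := by
  set ℓ := Real.log α⁻¹ with hℓ
  have hℓ0 : 0 ≤ ℓ := Real.log_nonneg ((one_le_inv₀ hα).mpr hα1)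
  have hαe : α = Real.exp (-ℓ) := by
    rw [hℓ, Real.log_inv, neg_neg, Real.exp_log hα]
  have h1 : Real.exp (-(3 * ℓ + 1)) ≤ α ^ 3 / 2 := by
    rw [neg_add, Real.exp_add, hαe, ← Real.exp_nat_mul, div_eq_mul_inv, Real.exp_neg 1]
    gcongr
    · exact le_of_eq (by push_cast; ring)
    · linarith [Real.exp_one_gt_d9]
  refine le_trans (exp_bound hL ?_) h1
  have h2 : (1 : ℝ) ≤ L ^ 9 := one_le_pow₀ (by linarith)
  have h3 : 3 * ℓ + 1 ≤ 4 * (1 + ℓ ^ 2) := by nlinarith [sq_nonneg (1 - ℓ)]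
  have h4 : 0 ≤ 1 + ℓ ^ 2 := by positivity
  nlinarith

end Numerics

/-- **Main driver for families with small mean square density.** There is an absolute
constant `C > 0` such that: let `H` be a finite abelian group of exponent `2`, `𝒜` a
family on `H` of density `α > 0`, `K := ‖f_𝒜‖²_{L²(H)}/α²` and `L ≥ max{K, 2}`; then
either `Λ(𝒜) ≥ exp(−(1 + (log α⁻¹)²)·exp(C·L³·(log L)²))`, or there are a subgroup
`H' ≤ H` of index `2` and a family `𝒜'` on `H'` with `P_{H'}(𝒜') ≥ α + L·α²/(4K)` and
`Λ(𝒜) ≥ 2⁻⁴·Λ(𝒜')`. -/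
theorem family_dichotomy_small_mean_square :
    ∃ C : ℝ, 0 < C ∧
      ∀ (H : Type) [AddCommGroup H] [Fintype H],
        (∀ x : H, x + x = 0) →
        ∀ (A : H → Finset H) (L : ℝ),
          let α : ℝ := famDensity A
          let K : ℝ :=
            ((∑ h, (((A h).card : ℝ) / (Fintype.card H : ℝ)) ^ 2) /
              (Fintype.card H : ℝ)) / α ^ 2
          0 < α → K ≤ L → 2 ≤ L →
          (famLambda A ≥
              Real.exp (-((1 + Real.log α⁻¹ ^ 2) *
                Real.exp (C * L ^ 3 * Real.log L ^ 2))) ∨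
            ∃ H' : AddSubgroup H, H'.index = 2 ∧
              ∃ A' : H' → Finset H',
                famDensity A' ≥ α + L * α ^ 2 / (4 * K) ∧
                famLambda A ≥ ((2 : ℝ) ^ 4)⁻¹ * famLambda A') := by
  refine ⟨35, by norm_num, ?_⟩
  intro H _ _ hH A L α K hα hKL hL
  obtain ⟨e, he⟩ := exists_pairing hH
  have hN := card_pos_real (H := H)
  have hαdef : α = famDensity A := rfl
  have hdens : (∑ h, ((A h).card : ℝ) / (Fintype.card H : ℝ)) / (Fintype.card H : ℝ) = α := by
    rw [← Finset.sum_div, div_div, ← sq]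
    rfl
  have hsq : (∑ h, (((A h).card : ℝ) / (Fintype.card H : ℝ)) ^ 2) / (Fintype.card H : ℝ)
      = K * α ^ 2 := by
    simp only [K]
    rw [div_mul_cancel₀ _ (by positivity)]
  clear_value K α
  have hα1 : α ≤ 1 := by
    rw [← hdens, div_le_one hN]
    calc ∑ h, ((A h).card : ℝ) / (Fintype.card H : ℝ) ≤ ∑ _h : H, (1 : ℝ) := by
          refine Finset.sum_le_sum fun h _ => ?_
          rw [div_le_one hN]
          exact_mod_cast Finset.card_le_univ (A h)
      _ = _ := by simp
  have hK : 1 ≤ K := by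
    have h1 := sq_sum_le_card_mul_sum_sq (s := (Finset.univ : Finset H))
      (f := fun h => ((A h).card : ℝ) / (Fintype.card H : ℝ))
    rw [Finset.card_univ, (div_eq_iff hN.ne').mp hdens, (div_eq_iff hN.ne').mp hsq] at h1
    have h2 : 0 < (α * (Fintype.card H : ℝ)) ^ 2 := by positivity
    refine le_of_mul_le_mul_right ?_ h2
    linarith
  by_cases hinc : ∃ γ : H, γ ≠ 0 ∧
      (L * α ^ 2 / (4 * K) ≤ |hat e (fun h => ((A h).card : ℝ) / (Fintype.card H : ℝ)) γ| ∨
        L * α ^ 2 / (4 * K) ≤ (∑ h, |hat e (ind (A h)) γ|) / (Fintype.card H : ℝ))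
  · right
    obtain ⟨γ, hγ, h⟩ := hinc
    rw [hαdef] at h ⊢
    exact increment hH he hγ A _ h
  left
  push Not at hinc
  by_cases hΛ : K * α ^ 3 / 2 ≤ famLambda A
  · refine le_trans (numerics_main_term hα hα1 hL) (le_trans ?_ hΛ)
    have : 0 < α ^ 3 := by positivity
    nlinarith
  have hlog0 : 0 ≤ Real.log (16 * L ^ 2 / α) := by
    apply Real.log_nonneg
    rw [le_div_iff₀ hα]
    nlinarith
  have hL0 : 0 < L := by linarith
  obtain ⟨s, hs, hlow⟩ := spectral_lower hH he A α K L hα hK hL hdens hsq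
    (fun γ hγ => (hinc γ hγ).1.le) (fun γ hγ => (hinc γ hγ).2.le) (not_le.mp hΛ)
    ⌊8192 * L ^ 6 * Real.log (16 * L ^ 2 / α)⌋₊ ⌈56 * L⌉₊
    (fun t ht => Nat.le_floor ht) (Nat.le_ceil _)
  refine le_trans (numerics hα hα1 hL _ _ s (Nat.floor_le (by positivity)) ?_ hs) hlow
  have := Nat.ceil_lt_add_one (show 0 ≤ 56 * L by positivity)
  linarith
end

section
/- There exists an absolute constant c > 0 such that for every integer n ≥ 1 there is a subset A of G = (ℤ/4ℤ)^n containing no proper three-term arithmetic progression with |A| ≥ c · (4^n)^{2/3}. -/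
/-!
The set `A` consists of the vectors with all entries in `{0, 1, 3}` and exactly `w` nonzero
entries. If `x`, `x + d`, `x + 2d` all lie in `A`, then wherever `x` vanishes, `x + 2d` is an even
entry different from `2`, hence zero; so `d`, and with it `x + d`, is even there, and `x + d`
vanishes too. Thus the support of `x + d` is contained in that of `x`, and as both have size `w`
they agree. Entries on the common support are odd in both vectors, so `d` is even everywhere,
that is `2d = 0` (`two_nsmul_eq_zero_of_layer`).

There are `3 ^ n` vectors with entries in `{0, 1, 3}`, and `w` ranges over `n + 1` values, so some
layer has at least `3 ^ n / (n + 1)` elements (`exists_large_layer`). Since `3 > 4 ^ (2 / 3)`,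
Bernoulli's inequality gives `3 ^ n / (n + 1) ≥ c * (4 ^ (2 / 3)) ^ n` with
`c = 3 / 4 ^ (2 / 3) - 1`.
-/

/-- The vectors in `(ℤ/4ℤ)^n` with entries in `{0, 1, 3}` and exactly `w` nonzero entries. -/
def layer (n w : ℕ) : Finset (Fin n → ZMod 4) :=
  {x ∈ Fintype.piFinset fun _ => ({0, 1, 3} : Finset (ZMod 4)) |
    (Finset.univ.filter fun i => x i ≠ 0).card = w}

theorem two_nsmul_eq_zero_of_layer {n w : ℕ} {x d : Fin n → ZMod 4} (hx : x ∈ layer n w)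
    (hy : x + d ∈ layer n w) (hz : x + 2 • d ∈ layer n w) : 2 • d = 0 := by
  simp only [layer, Finset.mem_filter, Fintype.mem_piFinset] at hx hy hz
  have support_step : ∀ a b : ZMod 4, a + 2 • b ∈ ({0, 1, 3} : Finset (ZMod 4)) →
      a + b ∈ ({0, 1, 3} : Finset (ZMod 4)) → a + b ≠ 0 → a ≠ 0 := by decide
  have even_step : ∀ a b : ZMod 4, a ∈ ({0, 1, 3} : Finset (ZMod 4)) →
      a + b ∈ ({0, 1, 3} : Finset (ZMod 4)) → (a + b ≠ 0 ↔ a ≠ 0) → 2 • b = 0 := by decide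
  have hsub : (Finset.univ.filter fun i => (x + d) i ≠ 0) ⊆
      Finset.univ.filter fun i => x i ≠ 0 := by
    intro i hi
    simp only [Finset.mem_filter, Finset.mem_univ, true_and] at hi ⊢
    exact support_step _ _ (hz.1 i) (hy.1 i) hi
  have heq := Finset.eq_of_subset_of_card_le hsub (by rw [hx.2, hy.2])
  funext i
  refine even_step (x i) (d i) (hx.1 i) (hy.1 i) ?_
  simpa using Finset.ext_iff.mp heq i

theorem exists_large_layer (n : ℕ) :
    ∃ w : ℕ, (3 : ℝ) ^ n / (n + 1) ≤ (layer n w).card := by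
  have hcard : (Fintype.piFinset fun _ : Fin n => ({0, 1, 3} : Finset (ZMod 4))).card = 3 ^ n := by
    have h3 : ({0, 1, 3} : Finset (ZMod 4)).card = 3 := by decide
    simp [Fintype.card_piFinset, h3]
  obtain ⟨w, -, hw⟩ := Finset.exists_le_card_fiber_of_nsmul_le_card_of_maps_to
    (s := Fintype.piFinset fun _ : Fin n => ({0, 1, 3} : Finset (ZMod 4)))
    (t := Finset.range (n + 1))
    (f := fun x => (Finset.univ.filter fun i => x i ≠ 0).card)
    (b := (3 : ℝ) ^ n / (n + 1))
    (fun x _ => Finset.mem_range.mpr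
      (Nat.lt_succ_of_le ((Finset.card_le_univ _).trans_eq (Fintype.card_fin n))))
    ⟨0, by simp⟩
    (by
      rw [hcard, Finset.card_range, nsmul_eq_mul]
      push_cast
      exact (mul_div_cancel₀ _ (by positivity)).le)
  exact ⟨w, hw⟩

/-- **Lower bound.** There is an absolute constant `c > 0` such that for every `n ≥ 1`
there is a subset `A` of `(ℤ/4ℤ)^n` containing no proper three-term arithmetic
progression with `|A| ≥ c · (4^n)^{2/3}`. -/
theorem z4n_lower_bound :
    ∃ c : ℝ, 0 < c ∧
      ∀ n : ℕ, 1 ≤ n →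
        ∃ A : Finset (Fin n → ZMod 4),
          (∀ x d : Fin n → ZMod 4, x ∈ A → x + d ∈ A → x + 2 • d ∈ A → 2 • d = 0) ∧
          (A.card : ℝ) ≥ c * ((4 : ℝ) ^ n) ^ ((2 : ℝ) / 3) := by
  set q : ℝ := (4 : ℝ) ^ ((2 : ℝ) / 3) with hq
  have hq0 : 0 < q := by positivity
  have hcube : q ^ 3 = 16 := by
    rw [hq, ← Real.rpow_natCast, ← Real.rpow_mul (by norm_num)]
    norm_num
  have hq3 : q < 3 := by
    refine lt_of_pow_lt_pow_left₀ 3 (by norm_num) ?_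
    rw [hcube]
    norm_num
  have hc : 0 < 3 / q - 1 := by
    rw [sub_pos, one_lt_div hq0]
    exact hq3
  refine ⟨3 / q - 1, hc, fun n _ => ?_⟩
  obtain ⟨w, hw⟩ := exists_large_layer n
  refine ⟨layer n w, fun x d => two_nsmul_eq_zero_of_layer, le_trans ?_ hw⟩
  have hpow : ((4 : ℝ) ^ n) ^ ((2 : ℝ) / 3) = q ^ n := by
    rw [hq, ← Real.rpow_natCast, ← Real.rpow_natCast, ← Real.rpow_mul (by norm_num),
      ← Real.rpow_mul (by norm_num), mul_comm]
  have hbern := one_add_mul_le_pow (a := 3 / q - 1) (by linarith) n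
  rw [add_sub_cancel, div_pow, le_div_iff₀ (by positivity)] at hbern
  rw [hpow, le_div_iff₀ (by positivity)]
  -- The constant is at most `1`, because `q ≥ 3 / 2`.
  have hc1 : 3 / q - 1 ≤ 1 := by
    have hq2 : (3 : ℝ) / 2 ≤ q := by
      refine le_of_pow_le_pow_left₀ (n := 3) (by norm_num) hq0.le ?_
      rw [hcube]
      norm_num
    rw [sub_le_iff_le_add, div_le_iff₀ hq0]
    linarith
  have hqn : 0 < q ^ n := by positivity
  nlinarith [mul_le_mul_of_nonneg_right hc1 hqn.le]
end
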